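/- On the region R(1): uniformly on every compact subset K of the interior of R(1), ln|F_n(z)|/(2√n) → Re(√(Li₂(z))) as n → ∞; that is, sup_{z ∈ K} | ln|F_n(z)|/(2√n) − Re(√(Li₂(z))) | → 0. -/

import Mathlib

open Complex Filter

/-- `partsCount k n` is the number of partitions of `n` with exactly `k` parts. -/
noncomputable def partsCount (k n : ℕ) : ℕ := Nat.card {p : Nat.Partition n // p.parts.card = k}

/-- The partition polynomial `F_n(x) = ∑_{k=1}^n p_k(n) x^k`. -/
noncomputable def F (n : ℕ) (x : ℂ) : ℂ := ∑ k ∈ Finset.Icc 1 n, (partsCount k n : ℂ) * x ^ k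

/-- The dilogarithm `Li₂(z) = ∑_{n=1}^∞ zⁿ/n²`. -/
noncomputable def dilog (z : ℂ) : ℂ := ∑' n : ℕ, z ^ (n + 1) / ((n : ℂ) + 1) ^ 2

/-- `fk k x = (1/k)·Re √(Li₂(x^k))` with the principal branch square root. -/
noncomputable def fk (k : ℕ) (x : ℂ) : ℝ := (1 / (k : ℝ)) * ((dilog (x ^ k)) ^ (1 / 2 : ℂ)).re

/-- The region `R(1)`. -/
def R1 : Set ℂ := {x | ‖x‖ < 1 ∧ fk 2 x ≤ fk 1 x ∧ fk 3 x ≤ fk 1 x}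

/-- The region `R(2)`. -/
def R2 : Set ℂ := {x | ‖x‖ < 1 ∧ fk 1 x ≤ fk 2 x ∧ fk 3 x ≤ fk 2 x}

/-- The region `R(3)`. -/
def R3 : Set ℂ := {x | ‖x‖ < 1 ∧ fk 1 x ≤ fk 3 x ∧ fk 2 x ≤ fk 3 x}

open MeasureTheory Topology

/-!
For `‖q‖ < 1` the generating function `1 + ∑ₙ Fₙ(z) qⁿ = ∏ᵢ (1 - z qⁱ)⁻¹` is `exp (logGenFun z w)`
with `q = exp (-w)`, so `Fₙ(z)` is the integral of `exp (logGenFun z w + n w)` over a vertical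
segment of length `2π`, which is placed through the saddle point `w = √(Li₂ z) / √n`.

In a fixed cone around the positive real axis,
`logGenFun z w = Li₂(z) / w + log (1 - z) / 2 + o(1)`; on the scale of the saddle point the
integrand becomes a Gaussian with nonzero integral, times the factor `exp (2 √n √(Li₂ z))`.
Outside the cone, every limit point of `re w * logGenFun z w` is either `0` or comes from `w`
approaching `i θ` with `exp (i θ)` of finite order `k ≥ 2`; its real part is then at most
`fk k z ^ 2`, so such `w` are negligible as soon as `fk k z < fk 1 z` for all `k ≥ 2`.

On `R(1)` the weak inequality holds for `k ≥ 4` by explicit estimates of `Li₂`, resting on a lower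
bound for `‖Li₂ x‖ + re (Li₂ x)`. In the interior it is strict: by the maximum principle equality
would make `√(Li₂ (x ^ k)) / k - √(Li₂ x)` locally constant, hence `Li₂ (y ^ k) = k² Li₂ y` on the
whole disk, which fails at `y = 1 / 2`.
-/

/-! ### The dilogarithm -/

theorem summable_one_div_add_one_sq : Summable fun n : ℕ => 1 / ((n : ℝ) + 1) ^ 2 := by
  simpa using (summable_nat_add_iff 1).2 (Real.summable_one_div_nat_pow.2 one_lt_two)

theorem tsum_one_div_add_one_sq : ∑' n : ℕ, 1 / ((n : ℝ) + 1) ^ 2 = Real.pi ^ 2 / 6 := by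
  simpa using ((hasSum_nat_add_iff' 1).2 hasSum_zeta_two).tsum_eq

theorem norm_dilog_term (z : ℂ) (n : ℕ) :
    ‖z ^ (n + 1) / ((n : ℂ) + 1) ^ 2‖ = ‖z‖ ^ (n + 1) * (1 / ((n : ℝ) + 1) ^ 2) := by
  rw [norm_div, norm_pow, norm_pow, ← Nat.cast_succ, Complex.norm_natCast, Nat.cast_succ]
  ring

theorem norm_dilog_term_le {z : ℂ} (hz : ‖z‖ ≤ 1) (n : ℕ) :
    ‖z ^ (n + 1) / ((n : ℂ) + 1) ^ 2‖ ≤ ‖z‖ * (1 / ((n : ℝ) + 1) ^ 2) := by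
  rw [norm_dilog_term]
  gcongr
  exact pow_le_of_le_one (norm_nonneg _) hz n.succ_ne_zero

theorem hasSum_dilog {z : ℂ} (hz : ‖z‖ ≤ 1) :
    HasSum (fun n : ℕ => z ^ (n + 1) / ((n : ℂ) + 1) ^ 2) (dilog z) :=
  (Summable.of_norm_bounded (summable_one_div_add_one_sq.mul_left _)
    (norm_dilog_term_le hz)).hasSum

theorem norm_dilog_le {z : ℂ} (hz : ‖z‖ ≤ 1) : ‖dilog z‖ ≤ ‖z‖ * (Real.pi ^ 2 / 6) := by
  rw [← tsum_one_div_add_one_sq, ← tsum_mul_left]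
  exact tsum_of_norm_bounded (summable_one_div_add_one_sq.mul_left _).hasSum
    (norm_dilog_term_le hz)

theorem analyticOnNhd_dilog : AnalyticOnNhd ℂ dilog (Metric.ball 0 1) := by
  refine DifferentiableOn.analyticOnNhd ?_ Metric.isOpen_ball
  refine differentiableOn_tsum_of_summable_norm summable_one_div_add_one_sq
    (fun n => by fun_prop) Metric.isOpen_ball fun n z hz => ?_
  have hz : ‖z‖ ≤ 1 := (mem_ball_zero_iff.1 hz).le
  exact (norm_dilog_term_le hz n).trans (mul_le_of_le_one_left (by positivity) hz)

@[simp]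
theorem dilog_zero : dilog 0 = 0 := by simp [dilog]

theorem im_dilog_ofReal (x : ℝ) : (dilog x).im = 0 := by
  have : dilog x = ((∑' n : ℕ, x ^ (n + 1) / ((n : ℝ) + 1) ^ 2 : ℝ) : ℂ) := by
    simp [dilog, Complex.ofReal_tsum]
  rw [this, ofReal_im]

theorem norm_pow_lt_one {z : ℂ} (hz : ‖z‖ < 1) {k : ℕ} (hk : k ≠ 0) : ‖z ^ k‖ < 1 := by
  rw [norm_pow]
  exact pow_lt_one₀ (norm_nonneg z) hz hk

theorem analyticAt_dilog_pow {z : ℂ} (hz : ‖z‖ < 1) {k : ℕ} (hk : k ≠ 0) :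
    AnalyticAt ℂ (fun x => dilog (x ^ k)) z :=
  (analyticOnNhd_dilog _ (mem_ball_zero_iff.2 (norm_pow_lt_one hz hk))).comp
    (f := fun x => x ^ k) (by fun_prop)

theorem integral_mul_exp_neg_pow (n : ℕ) :
    ∫ s in Set.Ioi (0 : ℝ), s * Real.exp (-s) ^ (n + 1) = 1 / ((n : ℝ) + 1) ^ 2 := by
  have h := Real.integral_rpow_mul_exp_neg_mul_Ioi (a := 2) (r := (n : ℝ) + 1) two_pos
    (by positivity)
  rw [Real.Gamma_two, mul_one, Real.rpow_two, div_pow, one_pow] at h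
  rw [← h]
  refine setIntegral_congr_fun measurableSet_Ioi fun s _ => ?_
  norm_num [← Real.exp_nat_mul]

theorem integrableOn_mul_exp_neg_pow (n : ℕ) :
    IntegrableOn (fun s : ℝ => s * Real.exp (-s) ^ (n + 1)) (Set.Ioi 0) := by
  refine not_imp_comm.1 integral_undef ?_
  rw [integral_mul_exp_neg_pow]
  positivity

theorem exp_neg_le_one {s : ℝ} (hs : s ∈ Set.Ioi (0 : ℝ)) : Real.exp (-s) ≤ 1 :=
  Real.exp_le_one_iff.2 (neg_nonpos.2 (le_of_lt hs))

theorem norm_mul_exp_neg_le (x : ℂ) {s : ℝ} (hs : s ∈ Set.Ioi (0 : ℝ)) :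
    ‖x * (Real.exp (-s) : ℂ)‖ ≤ ‖x‖ := by
  rw [norm_mul, Complex.norm_real, Real.norm_of_nonneg (Real.exp_pos _).le]
  exact mul_le_of_le_one_right (norm_nonneg x) (exp_neg_le_one hs)

theorem integrableOn_dilog_kernel {x : ℂ} (hx : ‖x‖ < 1) :
    IntegrableOn (fun s : ℝ =>
      ((s * Real.exp (-s) : ℝ) : ℂ) * (x / (1 - x * Real.exp (-s)))) (Set.Ioi 0) := by
  have h0 := (integrableOn_mul_exp_neg_pow 0).ofReal (𝕜 := ℂ)
  simp only [zero_add, pow_one] at h0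
  refine h0.mul_bdd (c := 1 / (1 - ‖x‖)) (Measurable.aestronglyMeasurable (by fun_prop)) ?_
  filter_upwards [ae_restrict_mem measurableSet_Ioi] with s hs
  have h1 : 1 - ‖x‖ ≤ ‖1 - x * (Real.exp (-s) : ℂ)‖ := by
    have := norm_sub_norm_le (1 : ℂ) (x * (Real.exp (-s) : ℂ))
    rw [norm_one] at this
    linarith [norm_mul_exp_neg_le x hs]
  rw [norm_div]
  exact div_le_div₀ zero_le_one hx.le (sub_pos.2 hx) h1

theorem integral_norm_dilog_kernel_term (x : ℂ) (n : ℕ) :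
    ∫ s in Set.Ioi (0 : ℝ), ‖x ^ (n + 1) * ((s * Real.exp (-s) ^ (n + 1) : ℝ) : ℂ)‖ =
      ‖x ^ (n + 1) / ((n : ℂ) + 1) ^ 2‖ := by
  rw [norm_dilog_term, ← integral_mul_exp_neg_pow, ← integral_const_mul]
  refine setIntegral_congr_fun measurableSet_Ioi fun s (hs : 0 < s) => ?_
  rw [norm_mul, norm_pow, Complex.norm_real, Real.norm_of_nonneg (by positivity)]

theorem dilog_eq_integral {x : ℂ} (hx : ‖x‖ < 1) :
    dilog x = ∫ s in Set.Ioi (0 : ℝ),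
      ((s * Real.exp (-s) : ℝ) : ℂ) * (x / (1 - x * Real.exp (-s))) := by
  have key := hasSum_integral_of_summable_integral_norm (μ := volume.restrict (Set.Ioi (0 : ℝ)))
    (F := fun n s => x ^ (n + 1) * ((s * Real.exp (-s) ^ (n + 1) : ℝ) : ℂ))
    (fun n => (integrableOn_mul_exp_neg_pow n).ofReal.const_mul _)
    (by simpa only [integral_norm_dilog_kernel_term] using (hasSum_dilog hx.le).summable.norm)
  simp only [integral_const_mul, integral_complex_ofReal, integral_mul_exp_neg_pow] at key
  rw [(hasSum_dilog hx.le).unique (key.congr_fun fun n => by push_cast; ring)]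
  refine setIntegral_congr_fun measurableSet_Ioi fun s hs => ?_
  have hgeom := (hasSum_geometric_of_norm_lt_one
    ((norm_mul_exp_neg_le x hs).trans_lt hx)).mul_left (x * (s * Real.exp (-s) : ℝ))
  refine (hgeom.congr_fun fun n => by push_cast; ring).tsum_eq.trans ?_
  ring

theorem re_mul_dilog_eq_integral {x : ℂ} (hx : ‖x‖ < 1) (c : ℂ) :
    (c * dilog x).re = ∫ s in Set.Ioi (0 : ℝ),
      (s * Real.exp (-s)) * (c * (x / (1 - x * Real.exp (-s)))).re := by
  rw [dilog_eq_integral hx, ← integral_const_mul]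
  refine (integral_re ((integrableOn_dilog_kernel hx).const_mul c)).symm.trans ?_
  simp only [mul_left_comm c, RCLike.re_eq_complex_re, re_ofReal_mul]

theorem integrableOn_re_mul_dilog_kernel {x : ℂ} (hx : ‖x‖ < 1) (c : ℂ) :
    IntegrableOn (fun s : ℝ => (s * Real.exp (-s)) * (c * (x / (1 - x * Real.exp (-s)))).re)
      (Set.Ioi 0) := by
  refine ((integrableOn_dilog_kernel hx).const_mul c).re.congr (.of_forall fun s => ?_)
  simp only [mul_left_comm c, RCLike.re_eq_complex_re, re_ofReal_mul]

theorem integral_mul_exp_neg_mul_sum {N : ℕ} (a : Fin N → ℝ) :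
    ∫ s in Set.Ioi (0 : ℝ), (s * Real.exp (-s)) * ∑ i, a i * Real.exp (-s) ^ (i : ℕ) =
      ∑ i, a i * (1 / ((i : ℝ) + 1) ^ 2) := by
  simp_rw [← integral_mul_exp_neg_pow, ← integral_const_mul]
  rw [← integral_finsetSum _ fun (i : Fin N) _ =>
    (integrableOn_mul_exp_neg_pow i).const_mul _]
  congr with s
  rw [Finset.mul_sum]
  exact Finset.sum_congr rfl fun n _ => by ring

theorem integrableOn_mul_exp_neg_mul_sum {N : ℕ} (a : Fin N → ℝ) :
    IntegrableOn (fun s => (s * Real.exp (-s)) * ∑ i, a i * Real.exp (-s) ^ (i : ℕ))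
      (Set.Ioi 0) := by
  simp_rw [Finset.mul_sum]
  refine integrable_finsetSum _ fun i _ =>
    ((integrableOn_mul_exp_neg_pow i).const_mul (a i)).congr (.of_forall fun s => ?_)
  ring

theorem sum_div_sq_le_re_mul_dilog {x : ℂ} (hx : ‖x‖ < 1) (c : ℂ) {N : ℕ} (a : Fin N → ℝ)
    (h : ∀ t : ℝ, 0 < t → t ≤ 1 → ∑ i, a i * t ^ (i : ℕ) ≤ (c * (x / (1 - x * t))).re) :
    ∑ i, a i * (1 / ((i : ℝ) + 1) ^ 2) ≤ (c * dilog x).re := by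
  rw [← integral_mul_exp_neg_mul_sum, re_mul_dilog_eq_integral hx]
  refine setIntegral_mono_on (integrableOn_mul_exp_neg_mul_sum a)
    (integrableOn_re_mul_dilog_kernel hx c) measurableSet_Ioi fun s (hs : 0 < s) => ?_
  gcongr
  exact h _ (Real.exp_pos _) (exp_neg_le_one hs)

theorem re_dilog_nonpos {x : ℂ} (hx : ‖x‖ < 1) (h : x.re ≤ 0) : (dilog x).re ≤ 0 := by
  rw [← one_mul (dilog x), re_mul_dilog_eq_integral hx]
  refine setIntegral_nonpos measurableSet_Ioi fun s (hs : 0 < s) => ?_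
  refine mul_nonpos_of_nonneg_of_nonpos (by positivity) ?_
  have hnum : x.re * (1 - x * Real.exp (-s)).re + x.im * (1 - x * Real.exp (-s)).im ≤ 0 := by
    simp only [sub_re, sub_im, one_re, one_im, re_mul_ofReal, im_mul_ofReal]
    nlinarith [Real.exp_pos (-s), mul_nonneg (Real.exp_pos (-s)).le (sq_nonneg x.re),
      mul_nonneg (Real.exp_pos (-s)).le (sq_nonneg x.im)]
  rw [one_mul, div_re, ← add_div]
  exact div_nonpos_of_nonpos_of_nonneg hnum (normSq_nonneg _)

theorem norm_add_re_nonneg (w : ℂ) : 0 ≤ ‖w‖ + w.re := by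
  linarith [abs_re_le_norm w, neg_abs_le w.re]

theorem re_sq_add_im_sq (w : ℂ) : w.re ^ 2 + w.im ^ 2 = ‖w‖ ^ 2 := by
  rw [← normSq_eq_norm_sq, normSq_apply]
  ring

theorem re_sq_eq (w : ℂ) : (w ^ 2).re = 2 * w.re ^ 2 - ‖w‖ ^ 2 := by
  rw [← re_sq_add_im_sq, pow_two, mul_re]
  ring

theorem re_add_norm_div_one_sub (x : ℂ) (t : ℝ) :
    ((x + ‖x‖) / (1 - x * t)).re =
      (‖x‖ + x.re) * ((1 - t * ‖x‖) / normSq (1 - x * t)) := by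
  rw [div_re, ← add_div, ← mul_div_assoc]
  congr 1
  simp only [add_re, add_im, sub_re, sub_im, one_re, one_im, ofReal_re, ofReal_im,
    re_mul_ofReal, im_mul_ofReal]
  linear_combination -t * re_sq_add_im_sq x

theorem cubic_le_div_one_add_sq {v : ℝ} (h0 : 0 ≤ v) :
    1 - 3 * v + 13 / 4 * v ^ 2 - 5 / 4 * v ^ 3 ≤ (1 - v) / (1 + v) ^ 2 := by
  rw [le_div_iff₀ (by positivity)]
  have : 0 ≤ (1 - v) ^ 2 * v ^ 2 * (7 / 4 + 5 / 4 * v) := by positivity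
  linarith

theorem add_norm_mul_cubic_le {x : ℂ} (hx : ‖x‖ < 1) {t : ℝ} (h0 : 0 < t) (h1 : t ≤ 1) :
    (‖x‖ + x.re) * (1 - 3 * (t * ‖x‖) + 13 / 4 * (t * ‖x‖) ^ 2 - 5 / 4 * (t * ‖x‖) ^ 3) ≤
      ((x + ‖x‖) / (1 - x * t)).re := by
  have hnorm : ‖x * (t : ℂ)‖ = t * ‖x‖ := by
    rw [norm_mul, norm_real, Real.norm_of_nonneg h0.le, mul_comm]
  have hlt : t * ‖x‖ < 1 := (mul_le_of_le_one_left (norm_nonneg x) h1).trans_lt hx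
  have hne : 1 - x * (t : ℂ) ≠ 0 := fun h =>
    hlt.ne (by rw [← hnorm, ← sub_eq_zero.1 h, norm_one])
  have hden : normSq (1 - x * t) ≤ (1 + t * ‖x‖) ^ 2 := by
    rw [normSq_eq_norm_sq]
    gcongr
    simpa only [norm_one, hnorm] using norm_sub_le (1 : ℂ) (x * t)
  rw [re_add_norm_div_one_sub]
  gcongr
  · exact norm_add_re_nonneg x
  · refine (cubic_le_div_one_add_sq (by positivity)).trans ?_
    exact div_le_div_of_nonneg_left (sub_nonneg.2 hlt.le) (normSq_pos.2 hne) hden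

-- The test vector `1 + conj x / ‖x‖` turns the kernel `x / (1 - x t)` into `(x + ‖x‖) / (1 - x t)`.
theorem norm_add_re_le_norm_dilog_add_re {x : ℂ} (hx : ‖x‖ < 1) :
    0.53 * (‖x‖ + x.re) ≤ ‖dilog x‖ + (dilog x).re := by
  rcases eq_or_ne x 0 with rfl | hx0
  · simp
  have hr : (‖x‖ : ℂ) ≠ 0 := ofReal_ne_zero.2 (norm_ne_zero_iff.2 hx0)
  have hcx (w : ℂ) : (1 + starRingEnd ℂ x / ‖x‖) * (x / w) = (x + ‖x‖) / w := by
    have : (1 + starRingEnd ℂ x / ‖x‖) * x = x + ‖x‖ := by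
      field_simp
      linear_combination conj_mul' x
    rw [← mul_div_assoc, this]
  have hc : ((1 + starRingEnd ℂ x / ‖x‖) * dilog x).re ≤ ‖dilog x‖ + (dilog x).re := by
    have : ‖starRingEnd ℂ x / ‖x‖ * dilog x‖ = ‖dilog x‖ := by simp [hx0]
    rw [add_mul, one_mul, add_re, add_comm]
    gcongr
    exact (re_le_norm _).trans_eq this
  have hsum := sum_div_sq_le_re_mul_dilog hx (1 + starRingEnd ℂ x / ‖x‖)
    (fun i => (‖x‖ + x.re) * ![1, -3 * ‖x‖, 13 / 4 * ‖x‖ ^ 2, -5 / 4 * ‖x‖ ^ 3] i)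
    fun t h0 h1 => by
      rw [hcx]
      refine le_trans (le_of_eq ?_) (add_norm_mul_cubic_le hx h0 h1)
      simp [Fin.sum_univ_four]
      ring
  refine le_trans ?_ (hsum.trans hc)
  have hcubic : 0.53 ≤ 1 - 3 / 4 * ‖x‖ + 13 / 36 * ‖x‖ ^ 2 - 5 / 64 * ‖x‖ ^ 3 := by
    nlinarith [norm_nonneg x, mul_nonneg (norm_nonneg x) (sq_nonneg (1 - ‖x‖)),
      mul_nonneg (sq_nonneg ‖x‖) (sub_nonneg.2 hx.le), sq_nonneg (1 - ‖x‖)]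
  refine (mul_le_mul_of_nonneg_right hcubic (norm_add_re_nonneg x)).trans_eq ?_
  simp [Fin.sum_univ_four]
  ring

/-! ### The comparison of `fk k` with `fk 1` on `R(1)` -/

theorem fk_nonneg (k : ℕ) (x : ℂ) : 0 ≤ fk k x := by
  rw [fk, one_div (2 : ℂ), cpow_inv_two_re]
  positivity

theorem fk_sq (k : ℕ) (x : ℂ) :
    fk k x ^ 2 = (‖dilog (x ^ k)‖ + (dilog (x ^ k)).re) / (2 * k ^ 2) := by
  rw [fk, one_div (2 : ℂ), cpow_inv_two_re, mul_pow,
    Real.sq_sqrt (div_nonneg (norm_add_re_nonneg _) zero_le_two)]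
  ring

/-- The branch `√(Li₂(x ^ k)) / k` of the square root of `Li₂(x ^ k) / k ^ 2` whose real part is
`fk k x`. -/
noncomputable def dilogRoot (k : ℕ) (x : ℂ) : ℂ := (k : ℂ)⁻¹ * dilog (x ^ k) ^ (1 / 2 : ℂ)

theorem re_dilogRoot (k : ℕ) (x : ℂ) : (dilogRoot k x).re = fk k x := by
  rw [dilogRoot, fk, ← ofReal_natCast, ← ofReal_inv, re_ofReal_mul, one_div (k : ℝ)]

theorem dilogRoot_sq (k : ℕ) (x : ℂ) : dilogRoot k x ^ 2 = dilog (x ^ k) / k ^ 2 := by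
  rw [dilogRoot, mul_pow, one_div (2 : ℂ), cpow_ofNat_inv_pow, inv_pow, div_eq_inv_mul]

theorem dilog_pow_mem_slitPlane {k : ℕ} {x : ℂ} (h : 0 < fk k x) :
    dilog (x ^ k) ∈ slitPlane := by
  contrapose! h
  rw [mem_slitPlane_iff, not_or, not_lt, not_not] at h
  have hnorm : ‖dilog (x ^ k)‖ + (dilog (x ^ k)).re = 0 := by
    rw [← abs_re_eq_norm.2 h.2, abs_of_nonpos h.1, neg_add_cancel]
  have := fk_sq k x
  rw [hnorm, zero_div] at this
  exact (sq_eq_zero_iff.1 this).le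

theorem analyticAt_dilogRoot {k : ℕ} {x : ℂ} (hx : ‖x‖ < 1) (hk : k ≠ 0) (h : 0 < fk k x) :
    AnalyticAt ℂ (dilogRoot k) x :=
  analyticAt_const.mul
    ((analyticAt_dilog_pow hx hk).cpow analyticAt_const (dilog_pow_mem_slitPlane h))

theorem pi_sq_div_six_le : Real.pi ^ 2 / 6 ≤ 1.645 := by
  nlinarith [Real.pi_lt_d4, Real.pi_pos]

theorem norm_dilog_pow_le {x : ℂ} (hx : ‖x‖ < 1) {k : ℕ} (hk : k ≠ 0) :
    ‖dilog (x ^ k)‖ ≤ 1.645 * ‖x‖ ^ k := by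
  refine (norm_dilog_le (norm_pow_lt_one hx hk).le).trans ?_
  rw [norm_pow, mul_comm]
  gcongr
  exact pi_sq_div_six_le

theorem le_fk_one_sq {x : ℂ} (hx : ‖x‖ < 1) : 0.265 * (‖x‖ + x.re) ≤ fk 1 x ^ 2 := by
  have := norm_add_re_le_norm_dilog_add_re hx
  rw [fk_sq, pow_one, Nat.cast_one]
  linarith

theorem le_fk_two_sq {x : ℂ} (hx : ‖x‖ < 1) : 0.1325 * x.re ^ 2 ≤ fk 2 x ^ 2 := by
  have := norm_add_re_le_norm_dilog_add_re (norm_pow_lt_one hx two_ne_zero)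
  rw [re_sq_eq, norm_pow] at this
  rw [fk_sq, Nat.cast_ofNat]
  linarith

theorem fk_sq_le {x : ℂ} (hx : ‖x‖ < 1) {k : ℕ} (hk : k ≠ 0) :
    fk k x ^ 2 ≤ 1.645 * ‖x‖ ^ k / k ^ 2 := by
  rw [fk_sq, mul_comm (2 : ℝ), ← div_div, div_right_comm]
  gcongr
  linarith [norm_dilog_pow_le hx hk, re_le_norm (dilog (x ^ k))]

theorem fk_four_sq_le {x : ℂ} (hx : ‖x‖ < 1) (h : (x ^ 4).re ≤ 0) :
    fk 4 x ^ 2 ≤ 0.0515 * ‖x‖ ^ 4 := by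
  have h1 := norm_dilog_pow_le hx four_ne_zero
  have h2 := re_dilog_nonpos (norm_pow_lt_one hx four_ne_zero) h
  rw [fk_sq, Nat.cast_ofNat]
  linarith [show 0 ≤ ‖x‖ ^ 4 by positivity]

section Region

variable {x : ℂ} (hx : ‖x‖ < 1) (h21 : fk 2 x ≤ fk 1 x)
include hx

theorem norm_mul_norm_add_re_le_fk_one_sq : 0.265 * (‖x‖ * (‖x‖ + x.re)) ≤ fk 1 x ^ 2 := by
  refine le_trans ?_ (le_fk_one_sq hx)
  gcongr
  exact mul_le_of_le_one_left (norm_add_re_nonneg x) hx.le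

include h21

theorem re_sq_le_fk_one_sq : 0.1325 * x.re ^ 2 ≤ fk 1 x ^ 2 :=
  (le_fk_two_sq hx).trans (pow_le_pow_left₀ (fk_nonneg _ _) h21 2)

theorem norm_sq_le_fk_one_sq : 0.0659 * ‖x‖ ^ 2 ≤ fk 1 x ^ 2 := by
  nlinarith [norm_mul_norm_add_re_le_fk_one_sq hx, re_sq_le_fk_one_sq hx h21,
    sq_nonneg (x.re + 0.732 * ‖x‖)]

theorem norm_sq_le_fk_one_sq_of_re_pow_four_pos (h : 0 < (x ^ 4).re) :
    0.1029 * ‖x‖ ^ 2 ≤ fk 1 x ^ 2 := by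
  have hsq := re_sq_le_fk_one_sq hx h21
  have hlin := norm_mul_norm_add_re_le_fk_one_sq hx
  have hre : (x ^ 4).re = 2 * (2 * x.re ^ 2 - ‖x‖ ^ 2) ^ 2 - (‖x‖ ^ 2) ^ 2 := by
    rw [show x ^ 4 = (x ^ 2) ^ 2 by ring, re_sq_eq, re_sq_eq, norm_pow]
  have habs : 0.7 * ‖x‖ ^ 2 < |2 * x.re ^ 2 - ‖x‖ ^ 2| := by
    apply lt_of_pow_lt_pow_left₀ 2 (abs_nonneg _)
    rw [sq_abs]
    nlinarith [sq_nonneg (‖x‖ ^ 2)]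
  rcases lt_abs.1 habs with h7 | h7
  · nlinarith
  · have : -0.4 * ‖x‖ ≤ x.re := by
      by_contra! hc
      nlinarith [norm_nonneg x]
    nlinarith [norm_nonneg x]

theorem fk_four_le_fk_one : fk 4 x ≤ fk 1 x := by
  refine le_of_sq_le_sq ?_ (fk_nonneg _ _)
  have hpow : ‖x‖ ^ 4 ≤ ‖x‖ ^ 2 := pow_le_pow_of_le_one (norm_nonneg x) hx.le (by norm_num)
  rcases le_or_gt (x ^ 4).re 0 with h | h
  · linarith [fk_four_sq_le hx h, norm_sq_le_fk_one_sq hx h21, sq_nonneg ‖x‖]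
  · have := fk_sq_le hx four_ne_zero
    rw [Nat.cast_ofNat] at this
    linarith [norm_sq_le_fk_one_sq_of_re_pow_four_pos hx h21 h, sq_nonneg ‖x‖]

theorem fk_le_fk_one_of_five_le {k : ℕ} (hk : 5 ≤ k) : fk k x ≤ fk 1 x := by
  refine le_of_sq_le_sq ?_ (fk_nonneg _ _)
  calc fk k x ^ 2 ≤ 1.645 * ‖x‖ ^ k / k ^ 2 := fk_sq_le hx (by lia)
    _ ≤ 1.645 * ‖x‖ ^ 2 / 5 ^ 2 := by
      gcongr 1.645 * ?_ / ?_ ^ 2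
      · exact pow_le_pow_of_le_one (norm_nonneg x) hx.le (by lia)
      · exact_mod_cast hk
    _ ≤ 0.0659 * ‖x‖ ^ 2 := by linarith [sq_nonneg ‖x‖]
    _ ≤ fk 1 x ^ 2 := norm_sq_le_fk_one_sq hx h21

end Region

theorem fk_le_fk_one {x : ℂ} (hx : x ∈ R1) {k : ℕ} (hk : 2 ≤ k) : fk k x ≤ fk 1 x := by
  obtain ⟨hx1, h21, h31⟩ := hx
  obtain rfl | rfl | rfl | hk5 : k = 2 ∨ k = 3 ∨ k = 4 ∨ 5 ≤ k := by lia
  exacts [h21, h31, fk_four_le_fk_one hx1 h21, fk_le_fk_one_of_five_le hx1 h21 hk5]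

theorem fk_one_ofReal_of_nonpos {y : ℝ} (h : ‖(y : ℂ)‖ < 1) (hy : y ≤ 0) : fk 1 y = 0 := by
  have hnonpos : (dilog y).re ≤ 0 := re_dilog_nonpos h hy
  have := fk_sq 1 y
  rw [pow_one, ← abs_re_eq_norm.2 (im_dilog_ofReal y), abs_of_nonpos hnonpos, neg_add_cancel,
    zero_div] at this
  exact sq_eq_zero_iff.1 this

theorem ofReal_notMem_R1 {y : ℝ} (hy : y < 0) : (y : ℂ) ∉ R1 := by
  rintro ⟨h, h21, -⟩
  have := re_sq_le_fk_one_sq h h21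
  rw [fk_one_ofReal_of_nonpos h hy.le, ofReal_re] at this
  nlinarith

theorem zero_notMem_interior_R1 : (0 : ℂ) ∉ interior R1 := by
  intro h
  have hcont : Tendsto (fun y : ℝ => (y : ℂ)) (𝓝[<] 0) (𝓝 (0 : ℂ)) :=
    (continuous_ofReal.tendsto' 0 0 ofReal_zero).mono_left nhdsWithin_le_nhds
  obtain ⟨y, hy, hy0⟩ :=
    ((hcont.eventually (mem_interior_iff_mem_nhds.1 h)).and self_mem_nhdsWithin).exists
  exact ofReal_notMem_R1 hy0 hy

theorem fk_one_pos {x : ℂ} (hx : x ∈ interior R1) : 0 < fk 1 x := by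
  obtain ⟨hx1, h21, -⟩ := interior_subset hx
  have hx0 : x ≠ 0 := fun h => zero_notMem_interior_R1 (h ▸ hx)
  refine (fk_nonneg 1 x).lt_of_ne' fun h => ?_
  have := norm_sq_le_fk_one_sq hx1 h21
  rw [h] at this
  nlinarith [norm_pos_iff.2 hx0]

theorem eventually_eq_of_isLocalMax_re {f : ℂ → ℂ} {z : ℂ} (hf : AnalyticAt ℂ f z)
    (hmax : IsLocalMax (fun y => (f y).re) z) : ∀ᶠ y in 𝓝 z, f y = f z := by
  refine hf.eventually_constant_or_nhds_le_map_nhds.resolve_right fun hopen => ?_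
  have h : Set.Iic (f z).re ∈ 𝓝 (f z).re := isOpenMap_re.nhds_le _ (hopen hmax)
  rw [← mem_interior_iff_mem_nhds, interior_Iic] at h
  exact lt_irrefl (f z).re h

-- Eliminating the two square roots turns the relation into a polynomial one between
-- `Li₂(y ^ k)` and `Li₂(y)`, which extends to the whole disk; at `0` it forces `c = 0`.
theorem dilog_pow_eq_of_dilogRoot_eventually_eq {x c : ℂ} (hx : ‖x‖ < 1) {k : ℕ} (hk : k ≠ 0)
    (h : ∀ᶠ y in 𝓝 x, dilogRoot k y - dilogRoot 1 y = c) {y : ℂ} (hy : ‖y‖ < 1) :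
    dilog (y ^ k) = k ^ 2 * dilog y := by
  set P : ℂ → ℂ := fun y =>
    (dilog (y ^ k) / k ^ 2 - dilog (y ^ 1) - c ^ 2) ^ 2 - 4 * c ^ 2 * dilog (y ^ 1) with hP
  have hPan : AnalyticOnNhd ℂ P (Metric.ball 0 1) := fun y hy => by
    have hk := analyticAt_dilog_pow (mem_ball_zero_iff.1 hy) hk
    have h1 := analyticAt_dilog_pow (mem_ball_zero_iff.1 hy) one_ne_zero
    exact (((hk.div_const.sub h1).sub analyticAt_const).pow 2).sub (analyticAt_const.mul h1)
  have hPx : P =ᶠ[𝓝 x] 0 := by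
    filter_upwards [h] with y hy
    have h1 := dilogRoot_sq 1 y
    rw [Nat.cast_one, one_pow, div_one] at h1
    simp only [hP, Pi.zero_apply, ← h1, ← dilogRoot_sq, sub_eq_iff_eq_add'.1 hy]
    ring
  have hP0 := hPan.eqOn_zero_of_preconnected_of_eventuallyEq_zero
    (convex_ball (0 : ℂ) 1).isPreconnected (mem_ball_zero_iff.2 hx) hPx
  have hc : c = 0 := by
    simpa [hP, hk] using hP0 (Metric.mem_ball_self (x := (0 : ℂ)) one_pos)
  have hPy := hP0 (mem_ball_zero_iff.2 hy)
  simp only [hP, hc, pow_one, Pi.zero_apply, ne_eq, OfNat.ofNat_ne_zero, not_false_eq_true,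
    zero_pow, sub_zero, mul_zero, zero_mul, pow_eq_zero_iff, sub_eq_zero] at hPy
  rw [← hPy]
  field_simp

theorem dilog_half_pow_ne {k : ℕ} (hk : 2 ≤ k) :
    dilog ((1 / 2) ^ k) ≠ k ^ 2 * dilog (1 / 2) := by
  intro h
  have hhalf : ‖(1 / 2 : ℂ)‖ = 1 / 2 := by simp
  have hlt : ‖(1 / 2 : ℂ)‖ < 1 := by rw [hhalf]; norm_num
  have hlower : 0.265 ≤ ‖dilog (1 / 2)‖ := by
    have := norm_add_re_le_norm_dilog_add_re hlt
    rw [hhalf, show (1 / 2 : ℂ).re = 1 / 2 by norm_num] at this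
    linarith [re_le_norm (dilog (1 / 2))]
  have hupper := norm_dilog_pow_le hlt (k := k) (by lia)
  rw [h, norm_mul, norm_pow, norm_natCast, hhalf] at hupper
  have hk2 : (2 : ℝ) ^ 2 ≤ (k : ℝ) ^ 2 := by gcongr; exact_mod_cast hk
  have hpow : (1 / 2 : ℝ) ^ k ≤ (1 / 2) ^ 2 :=
    pow_le_pow_of_le_one (by norm_num) (by norm_num) hk
  nlinarith

theorem fk_lt_fk_one {x : ℂ} (hx : x ∈ interior R1) {k : ℕ} (hk : 2 ≤ k) :
    fk k x < fk 1 x := by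
  have hpos := fk_one_pos hx
  have hx1 : ‖x‖ < 1 := (interior_subset hx).1
  have hk0 : k ≠ 0 := by lia
  refine (fk_le_fk_one (interior_subset hx) hk).lt_of_ne fun heq => ?_
  have han := (analyticAt_dilogRoot hx1 hk0 (heq ▸ hpos)).sub
    (analyticAt_dilogRoot hx1 one_ne_zero hpos)
  have hmax : IsLocalMax (fun y => ((dilogRoot k - dilogRoot 1) y).re) x := by
    filter_upwards [mem_interior_iff_mem_nhds.1 hx] with y hy
    simp only [Pi.sub_apply, sub_re, re_dilogRoot, heq, sub_self, sub_nonpos]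
    exact fk_le_fk_one hy hk
  have hconst := eventually_eq_of_isLocalMax_re han hmax
  refine dilog_half_pow_ne hk (dilog_pow_eq_of_dilogRoot_eventually_eq hx1 hk0 hconst ?_)
  norm_num

/-! ### The generating function of the partition polynomials -/

theorem F_eq_sum_partition {n : ℕ} (hn : n ≠ 0) (z : ℂ) :
    F n z = ∑ p : n.Partition, z ^ p.parts.card := by
  have hcard (p : n.Partition) : p.parts.card ∈ Finset.Icc 1 n := by
    have hle := Multiset.card_nsmul_le_sum (s := p.parts) (a := 1) fun x hx => p.parts_pos hx
    rw [p.parts_sum, smul_eq_mul, mul_one] at hle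
    refine Finset.mem_Icc.2 ⟨Multiset.card_pos.2 fun h => hn ?_, hle⟩
    rw [← p.parts_sum, h, Multiset.sum_zero]
  rw [F, ← Finset.sum_fiberwise_of_maps_to fun p _ => hcard p]
  refine Finset.sum_congr rfl fun k _ => ?_
  rw [Finset.sum_congr rfl fun p hp => by rw [(Finset.mem_filter.1 hp).2], Finset.sum_const,
    nsmul_eq_mul, partsCount, Nat.card_eq_fintype_card, Fintype.card_subtype]

theorem hasSum_coeff_mul {S T : PowerSeries ℂ} {q v u : ℂ}
    (hS : HasSum (fun n => PowerSeries.coeff n S * q ^ n) v)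
    (hT : HasSum (fun n => PowerSeries.coeff n T * q ^ n) u) :
    HasSum (fun n => PowerSeries.coeff n (S * T) * q ^ n) (v * u) := by
  have hprod := tsum_mul_tsum_eq_tsum_sum_antidiagonal_of_summable_norm
    hS.summable.norm hT.summable.norm
  have hsum := (summable_norm_sum_mul_antidiagonal_of_summable_norm
    hS.summable.norm hT.summable.norm).of_norm.hasSum
  rw [← hprod, hS.tsum_eq, hT.tsum_eq] at hsum
  refine hsum.congr_fun fun n => ?_
  rw [PowerSeries.coeff_mul, Finset.sum_mul]
  refine Finset.sum_congr rfl fun kl hkl => ?_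
  rw [← Finset.HasAntidiagonal.mem_antidiagonal.1 hkl, pow_add]
  ring

section

open scoped PowerSeries.WithPiTopology

/-- The formal power series `∑ⱼ zʲ X ^ ((i + 1) j) = (1 - z X ^ (i + 1))⁻¹`, the factor of the
generating function of partitions that accounts for the parts equal to `i + 1`; `z` marks the
number of parts. -/
noncomputable def partFactor (z : ℂ) (i : ℕ) : PowerSeries ℂ :=
  1 + ∑' j, z ^ (j + 1) • PowerSeries.X ^ ((i + 1) * (j + 1))

theorem coeff_partFactor (z : ℂ) (i d : ℕ) :
    PowerSeries.coeff d (partFactor z i) =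
      (if d = 0 then 1 else 0) + ∑' j, if d = (i + 1) * (j + 1) then z ^ (j + 1) else 0 := by
  rw [partFactor, map_add, PowerSeries.coeff_one,
    (Nat.Partition.summable_genFun_term (fun _ c => z ^ c) i).map_tsum _
      (PowerSeries.WithPiTopology.continuous_coeff _ _)]
  simp only [map_smul, PowerSeries.coeff_X_pow, smul_eq_mul, mul_ite, mul_one, mul_zero]

theorem coeff_prod_partFactor_tendsto {n : ℕ} (hn : n ≠ 0) (z : ℂ) :
    Tendsto (fun N => PowerSeries.coeff n (∏ i ∈ Finset.range N, partFactor z i)) atTop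
      (𝓝 (F n z)) := by
  have h := ((PowerSeries.WithPiTopology.continuous_coeff ℂ n).tendsto _).comp
    (Nat.Partition.hasProd_genFun (R := ℂ) fun _ c => z ^ c).tendsto_prod_nat
  have hF : ∑ p : n.Partition, p.parts.toFinsupp.prod (fun _ c => z ^ c) = F n z := by
    rw [F_eq_sum_partition hn]
    refine Finset.sum_congr rfl fun p _ => ?_
    rw [Finsupp.prod, Finset.prod_pow_eq_pow_sum]
    exact congrArg (z ^ ·) (Multiset.toFinset_sum_count_eq _)
  rwa [Nat.Partition.coeff_genFun, hF] at h

end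

theorem coeff_partFactor_mul (z : ℂ) (i j : ℕ) :
    PowerSeries.coeff ((i + 1) * j) (partFactor z i) = z ^ j := by
  rw [coeff_partFactor]
  cases j <;> simp [eq_comm]

theorem coeff_partFactor_of_not_dvd (z : ℂ) {i d : ℕ} (h : ¬ i + 1 ∣ d) :
    PowerSeries.coeff d (partFactor z i) = 0 := by
  have h0 : d ≠ 0 := fun hd => h (hd ▸ dvd_zero _)
  have hne (j : ℕ) : d ≠ (i + 1) * (j + 1) := fun hd => h (Dvd.intro _ hd.symm)
  simp [coeff_partFactor, h0, hne]

theorem norm_mul_pow_lt_one {z q : ℂ} (hz : ‖z‖ < 1) (hq : ‖q‖ < 1) (i : ℕ) :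
    ‖z * q ^ (i + 1)‖ < 1 := by
  rw [norm_mul]
  exact mul_lt_one_of_nonneg_of_lt_one_left (norm_nonneg z) hz
    (norm_pow_lt_one hq i.succ_ne_zero).le

theorem hasSum_coeff_partFactor {z q : ℂ} (hz : ‖z‖ < 1) (hq : ‖q‖ < 1) (i : ℕ) :
    HasSum (fun n => PowerSeries.coeff n (partFactor z i) * q ^ n) (1 - z * q ^ (i + 1))⁻¹ := by
  have hinj : Function.Injective fun j : ℕ => (i + 1) * j :=
    mul_right_injective₀ i.succ_ne_zero
  refine (hinj.hasSum_iff fun d hd => ?_).1 ?_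
  · rw [coeff_partFactor_of_not_dvd z fun ⟨j, hj⟩ => hd ⟨j, hj.symm⟩, zero_mul]
  · refine (hasSum_geometric_of_norm_lt_one (norm_mul_pow_lt_one hz hq i)).congr_fun fun j => ?_
    rw [Function.comp_apply, coeff_partFactor_mul, mul_pow, pow_mul]

theorem hasSum_coeff_prod_partFactor {z q : ℂ} (hz : ‖z‖ < 1) (hq : ‖q‖ < 1) (N : ℕ) :
    HasSum (fun n => PowerSeries.coeff n (∏ i ∈ Finset.range N, partFactor z i) * q ^ n)
      (∏ i ∈ Finset.range N, (1 - z * q ^ (i + 1))⁻¹) := by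
  induction N with
  | zero =>
    simpa using hasSum_single (f := fun n => PowerSeries.coeff n (1 : PowerSeries ℂ) * q ^ n) 0
      fun n hn => by rw [PowerSeries.coeff_one, if_neg hn, zero_mul]
  | succ N ih =>
    rw [Finset.prod_range_succ, Finset.prod_range_succ]
    exact hasSum_coeff_mul ih (hasSum_coeff_partFactor hz hq N)

theorem integral_exp_neg_pow_mul_exp (σ : ℝ) (m n : ℕ) :
    ∫ φ in (-Real.pi)..Real.pi, cexp (-(σ + φ * I)) ^ m * cexp (n * (σ + φ * I)) =
      if m = n then (2 * Real.pi : ℂ) else 0 := by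
  have hexp (φ : ℝ) : cexp (-(σ + φ * I)) ^ m * cexp (n * (σ + φ * I)) =
      cexp ((n - m) * σ) * cexp ((n - m) * I * φ) := by
    rw [← Complex.exp_nat_mul, ← Complex.exp_add, ← Complex.exp_add]
    ring_nf
  simp only [hexp, intervalIntegral.integral_const_mul]
  split_ifs with h
  · simp only [h, sub_self, zero_mul, exp_zero, one_mul, intervalIntegral.integral_const,
      sub_neg_eq_add, ← two_mul, real_smul, mul_one, ofReal_mul, ofReal_ofNat]
  · have hne : (n : ℂ) - m ≠ 0 := sub_ne_zero.2 (Nat.cast_injective.ne (Ne.symm h))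
    have hperiod : cexp ((n - m) * I * Real.pi) = cexp ((n - m) * I * (-Real.pi : ℝ)) :=
      exp_eq_exp_iff_exists_int.2 ⟨n - m, by push_cast; ring⟩
    rw [integral_exp_mul_complex (mul_ne_zero hne I_ne_zero), hperiod, sub_self, zero_div,
      mul_zero]

-- Cauchy's formula for the `n`-th coefficient on the circle of radius `exp (-σ)`.
theorem integral_mul_exp_eq_coeff {a : ℕ → ℂ} {f : ℝ → ℂ} {σ : ℝ}
    (h : ∀ φ : ℝ, HasSum (fun m => a m * cexp (-(σ + φ * I)) ^ m) (f φ)) (n : ℕ) :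
    ∫ φ in (-Real.pi)..Real.pi, f φ * cexp (n * (σ + φ * I)) = 2 * Real.pi * a n := by
  have hnorm (m : ℕ) (φ : ℝ) :
      ‖a m * cexp (-(σ + φ * I)) ^ m * cexp (n * (σ + φ * I))‖ =
        ‖a m * cexp (-(σ + (0 : ℝ) * I)) ^ m‖ * Real.exp (n * σ) := by
    simp [Complex.norm_exp]
  have hsum := intervalIntegral.hasSum_integral_of_dominated_convergence (μ := volume)
    (a := -Real.pi) (b := Real.pi)
    (F := fun m φ => a m * cexp (-(σ + φ * I)) ^ m * cexp (n * (σ + φ * I)))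
    (fun m _ => ‖a m * cexp (-(σ + (0 : ℝ) * I)) ^ m‖ * Real.exp (n * σ))
    (fun m => Continuous.aestronglyMeasurable (by fun_prop))
    (fun m => .of_forall fun φ _ => (hnorm m φ).le)
    (.of_forall fun φ _ => (h 0).summable.norm.mul_right _) (by simp)
    (.of_forall fun φ _ => (h φ).mul_right _)
  simp only [mul_assoc, intervalIntegral.integral_const_mul, integral_exp_neg_pow_mul_exp,
    mul_ite, mul_zero] at hsum
  rw [hsum.unique (hasSum_single n fun m hm => if_neg hm), if_pos rfl]
  ring

theorem re_add_one_mul (m : ℕ) (w : ℂ) : (((m : ℂ) + 1) * w).re = ((m : ℝ) + 1) * w.re := by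
  rw [← Nat.cast_add_one, ← Nat.cast_add_one, ← ofReal_natCast, re_ofReal_mul]

theorem re_add_one_mul_pos (m : ℕ) {w : ℂ} (hw : 0 < w.re) : 0 < (((m : ℂ) + 1) * w).re := by
  rw [re_add_one_mul]
  positivity

theorem re_le_norm_exp_sub_one (u : ℂ) : u.re ≤ ‖cexp u - 1‖ := by
  have := norm_sub_norm_le (cexp u) 1
  rw [Complex.norm_exp, norm_one] at this
  linarith [Real.add_one_le_exp u.re]

theorem exp_sub_one_ne_zero {u : ℂ} (hu : 0 < u.re) : cexp u - 1 ≠ 0 :=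
  norm_pos_iff.1 (hu.trans_le (re_le_norm_exp_sub_one u))

theorem norm_exp_sub_one_inv_le {u : ℂ} (hu : 0 < u.re) : ‖(cexp u - 1)⁻¹‖ ≤ u.re⁻¹ := by
  rw [norm_inv]
  exact inv_anti₀ hu (re_le_norm_exp_sub_one u)

theorem norm_exp_neg_lt_one {u : ℂ} (hu : 0 < u.re) : ‖cexp (-u)‖ < 1 := by
  rwa [Complex.norm_exp, neg_re, Real.exp_lt_one_iff, neg_lt_zero]

theorem hasSum_exp_neg_pow {u : ℂ} (hu : 0 < u.re) :
    HasSum (fun i : ℕ => cexp (-u) ^ (i + 1)) (cexp u - 1)⁻¹ := by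
  have h := (hasSum_geometric_of_norm_lt_one (norm_exp_neg_lt_one hu)).mul_left (cexp (-u))
  simp only [← pow_succ'] at h
  have hinv : cexp (-u) * (1 - cexp (-u))⁻¹ = (cexp u - 1)⁻¹ := by
    rw [Complex.exp_neg, ← mul_inv, mul_sub, mul_one, mul_inv_cancel₀ (Complex.exp_ne_zero u)]
  rwa [hinv] at h

theorem norm_sum_exp_neg_pow_le {u : ℂ} (hu : 0 < u.re) (s : Finset ℕ) :
    ‖∑ i ∈ s, cexp (-u) ^ (i + 1)‖ ≤ u.re⁻¹ := by
  have hreal : HasSum (fun i : ℕ => ‖cexp (-u) ^ (i + 1)‖) (Real.exp u.re - 1)⁻¹ := by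
    have h : HasSum _ _ := hasSum_exp_neg_pow (u := u.re) hu
    simp only [norm_pow, Complex.norm_exp, neg_re]
    exact_mod_cast h
  calc ‖∑ i ∈ s, cexp (-u) ^ (i + 1)‖ ≤ ∑ i ∈ s, ‖cexp (-u) ^ (i + 1)‖ := norm_sum_le _ _
    _ ≤ (Real.exp u.re - 1)⁻¹ := sum_le_hasSum s (fun i _ => norm_nonneg _) hreal
    _ ≤ u.re⁻¹ := inv_anti₀ hu (by linarith [Real.add_one_le_exp u.re])

/-- The logarithm `∑ₘ zᵐ / (m (exp (m w) - 1))` of the generating function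
`∏ᵢ (1 - z qⁱ)⁻¹ = 1 + ∑ₙ Fₙ(z) qⁿ` at `q = exp (-w)`, for `‖z‖ < 1` and `0 < re w`. -/
noncomputable def logGenFun (z w : ℂ) : ℂ :=
  ∑' m : ℕ, z ^ (m + 1) / ((m : ℂ) + 1) * (cexp (((m : ℂ) + 1) * w) - 1)⁻¹

theorem norm_pow_div_mul_le {z c : ℂ} {b : ℝ} (hc : ‖c‖ ≤ b) (m : ℕ) :
    ‖z ^ (m + 1) / ((m : ℂ) + 1) * c‖ ≤ ‖z‖ ^ (m + 1) * b := by
  rw [norm_mul, norm_div, norm_pow, ← Nat.cast_add_one, norm_natCast]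
  refine mul_le_mul (div_le_self (by positivity) ?_) hc (norm_nonneg c) (by positivity)
  exact_mod_cast m.succ_pos

theorem inv_re_add_one_mul_le (m : ℕ) {w : ℂ} (hw : 0 < w.re) :
    (((m : ℂ) + 1) * w).re⁻¹ ≤ w.re⁻¹ := by
  rw [re_add_one_mul]
  exact inv_anti₀ hw (le_mul_of_one_le_left hw.le (by simp))

theorem summable_norm_pow_succ_mul {z : ℂ} (hz : ‖z‖ < 1) (b : ℝ) :
    Summable fun m : ℕ => ‖z‖ ^ (m + 1) * b :=
  ((summable_nat_add_iff 1).2 (summable_geometric_of_lt_one (norm_nonneg z) hz)).mul_right b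

theorem norm_logGenFun_term_le (z : ℂ) {w : ℂ} (hw : 0 < w.re) (m : ℕ) :
    ‖z ^ (m + 1) / ((m : ℂ) + 1) * (cexp (((m : ℂ) + 1) * w) - 1)⁻¹‖ ≤
      ‖z‖ ^ (m + 1) * w.re⁻¹ :=
  norm_pow_div_mul_le ((norm_exp_sub_one_inv_le (re_add_one_mul_pos m hw)).trans
    (inv_re_add_one_mul_le m hw)) m

theorem hasSum_logGenFun {z w : ℂ} (hz : ‖z‖ < 1) (hw : 0 < w.re) :
    HasSum (fun m : ℕ => z ^ (m + 1) / ((m : ℂ) + 1) * (cexp (((m : ℂ) + 1) * w) - 1)⁻¹)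
      (logGenFun z w) :=
  (Summable.of_norm_bounded (summable_norm_pow_succ_mul hz _)
    (norm_logGenFun_term_le z hw)).hasSum

theorem prod_inv_eq_exp_tsum {z q : ℂ} (hz : ‖z‖ < 1) (hq : ‖q‖ < 1) (N : ℕ) :
    ∏ i ∈ Finset.range N, (1 - z * q ^ (i + 1))⁻¹ =
      cexp (∑' m : ℕ, z ^ (m + 1) / ((m : ℂ) + 1) *
        ∑ i ∈ Finset.range N, (q ^ (m + 1)) ^ (i + 1)) := by
  have hlog : HasSum (fun m : ℕ => z ^ (m + 1) / ((m : ℂ) + 1) *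
      ∑ i ∈ Finset.range N, (q ^ (m + 1)) ^ (i + 1))
      (∑ i ∈ Finset.range N, -log (1 - z * q ^ (i + 1))) := by
    refine (hasSum_sum fun i _ =>
      hasSum_taylorSeries_neg_log' (norm_mul_pow_lt_one hz hq i)).congr_fun fun m => ?_
    rw [Finset.mul_sum]
    refine Finset.sum_congr rfl fun i _ => ?_
    rw [mul_pow, pow_right_comm]
    ring
  rw [hlog.tsum_eq, Complex.exp_sum]
  refine Finset.prod_congr rfl fun i _ => ?_
  have hne : 1 - z * q ^ (i + 1) ≠ 0 := fun h =>
    (norm_mul_pow_lt_one hz hq i).ne (by rw [← sub_eq_zero.1 h, norm_one])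
  rw [Complex.exp_neg, Complex.exp_log hne]

theorem exp_neg_pow_add_one (m : ℕ) (w : ℂ) :
    cexp (-w) ^ (m + 1) = cexp (-(((m : ℂ) + 1) * w)) := by
  rw [← Complex.exp_nat_mul, mul_neg, Nat.cast_add_one]

section PartialProducts

variable {z w : ℂ} (hz : ‖z‖ < 1) (hw : 0 < w.re)
include hw

theorem norm_partial_log_term_le (z : ℂ) (N m : ℕ) :
    ‖z ^ (m + 1) / ((m : ℂ) + 1) * ∑ i ∈ Finset.range N, (cexp (-w) ^ (m + 1)) ^ (i + 1)‖ ≤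
      ‖z‖ ^ (m + 1) * w.re⁻¹ := by
  refine norm_pow_div_mul_le (le_trans ?_ (inv_re_add_one_mul_le m hw)) m
  rw [exp_neg_pow_add_one]
  exact norm_sum_exp_neg_pow_le (re_add_one_mul_pos m hw) _

include hz

theorem tendsto_prod_inv_exp_logGenFun :
    Tendsto (fun N => ∏ i ∈ Finset.range N, (1 - z * cexp (-w) ^ (i + 1))⁻¹) atTop
      (𝓝 (cexp (logGenFun z w))) := by
  simp only [prod_inv_eq_exp_tsum hz (norm_exp_neg_lt_one hw)]
  refine (Complex.continuous_exp.tendsto _).comp ?_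
  refine tendsto_tsum_of_dominated_convergence (summable_norm_pow_succ_mul hz w.re⁻¹)
    (fun m => Tendsto.const_mul _ ?_) (.of_forall fun N m => norm_partial_log_term_le hw z N m)
  rw [exp_neg_pow_add_one]
  exact (hasSum_exp_neg_pow (re_add_one_mul_pos m hw)).tendsto_sum_nat

theorem norm_prod_inv_le (N : ℕ) :
    ‖∏ i ∈ Finset.range N, (1 - z * cexp (-w) ^ (i + 1))⁻¹‖ ≤
      Real.exp (∑' m : ℕ, ‖z‖ ^ (m + 1) * w.re⁻¹) := by
  rw [prod_inv_eq_exp_tsum hz (norm_exp_neg_lt_one hw), Complex.norm_exp]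
  refine Real.exp_le_exp.2 ((re_le_norm _).trans ?_)
  exact tsum_of_norm_bounded (summable_norm_pow_succ_mul hz _).hasSum
    (norm_partial_log_term_le hw z N)

end PartialProducts

theorem integral_exp_logGenFun_mul_exp {n : ℕ} (hn : n ≠ 0) {z : ℂ} (hz : ‖z‖ < 1) {σ : ℝ}
    (hσ : 0 < σ) :
    ∫ φ in (-Real.pi)..Real.pi, cexp (logGenFun z (σ + φ * I)) * cexp (n * (σ + φ * I)) =
      2 * Real.pi * F n z := by
  have hre (φ : ℝ) : ((σ : ℂ) + φ * I).re = σ := by simp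
  have hw (φ : ℝ) : 0 < ((σ : ℂ) + φ * I).re := by rwa [hre]
  have hcoeff := (coeff_prod_partFactor_tendsto hn z).const_mul (2 * (Real.pi : ℂ))
  simp only [← integral_mul_exp_eq_coeff fun φ =>
    hasSum_coeff_prod_partFactor hz (norm_exp_neg_lt_one (hw φ)) _] at hcoeff
  refine tendsto_nhds_unique ?_ hcoeff
  refine intervalIntegral.tendsto_integral_filter_of_dominated_convergence
    (fun _ => Real.exp (∑' m : ℕ, ‖z‖ ^ (m + 1) * σ⁻¹) * Real.exp (n * σ))
    (.of_forall fun N => Measurable.aestronglyMeasurable (by fun_prop))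
    (.of_forall fun N => .of_forall fun φ _ => ?_) (by simp)
    (.of_forall fun φ _ => (tendsto_prod_inv_exp_logGenFun hz (hw φ)).mul_const _)
  have hprod := norm_prod_inv_le hz (hw φ) N
  have hexp : ‖cexp (n * (σ + φ * I))‖ = Real.exp (n * σ) := by simp [Complex.norm_exp]
  rw [hre] at hprod
  rw [norm_mul, hexp]
  gcongr

/-! ### Limits at boundary points of the half-plane -/

theorem re_div_self_mem_closedBall (w : ℂ) :
    (w.re : ℂ) / w ∈ Metric.closedBall (1 / 2 : ℂ) (1 / 2) := by
  rcases eq_or_ne w 0 with rfl | hw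
  · simp
  · have h : (w.re : ℂ) / w - 1 / 2 = (starRingEnd ℂ) w / (2 * w) := by
      rw [re_eq_add_conj]
      field_simp
      ring
    rw [mem_closedBall_iff_norm, h, norm_div, norm_mul, norm_conj, Complex.norm_two]
    exact (div_mul_cancel_right₀ (norm_ne_zero_iff.2 hw) 2).le.trans (by norm_num)

theorem re_mul_le_of_mem_closedBall {r : ℂ} (hr : r ∈ Metric.closedBall (1 / 2 : ℂ) (1 / 2))
    (c : ℂ) : (r * c).re ≤ (‖c‖ + c.re) / 2 := by
  have hsplit : (r * c).re = ((r - 1 / 2) * c).re + c.re / 2 := by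
    simp only [mul_re, sub_re, sub_im, one_div, inv_re, inv_im]
    norm_num
    ring
  have hle : ((r - 1 / 2) * c).re ≤ 1 / 2 * ‖c‖ := by
    refine (re_le_norm _).trans ?_
    rw [norm_mul]
    gcongr
    exact mem_closedBall_iff_norm.1 hr
  linarith

theorem tendsto_div_exp_mul_sub_one {m : ℂ} (hm : m ≠ 0) :
    Tendsto (fun v => v / (cexp (m * v) - 1)) (𝓝[≠] 0) (𝓝 m⁻¹) := by
  have hd : HasDerivAt (fun v => cexp (m * v)) m 0 := by
    simpa using ((hasDerivAt_id (0 : ℂ)).const_mul m).cexp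
  refine (hd.tendsto_slope.inv₀ hm).congr fun v => ?_
  simp [slope_def_field]

theorem cexp_natCast_mul_eq (a w : ℂ) (n : ℕ) :
    cexp (n * w) = cexp a ^ n * cexp (n * (w - a)) := by
  rw [← Complex.exp_nat_mul, ← Complex.exp_add]
  ring_nf

section Limit

variable {ι : Type*} {l : Filter ι} {ζ w : ι → ℂ} {z a r : ℂ}

theorem tendsto_re_mul_exp_sub_one_inv (ha : Tendsto w l (𝓝 a))
    (hre : Tendsto (fun i => (w i).re) l (𝓝 0))
    (hne : ∀ᶠ i in l, w i ≠ a) (hr : Tendsto (fun i => ((w i).re : ℂ) / (w i - a)) l (𝓝 r))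
    {n : ℕ} (hn : n ≠ 0) :
    Tendsto (fun i => ((w i).re : ℂ) * (cexp (n * w i) - 1)⁻¹) l
      (𝓝 (if orderOf (cexp a) ∣ n then r / n else 0)) := by
  have hn' : (n : ℂ) ≠ 0 := Nat.cast_ne_zero.2 hn
  have hsub : Tendsto (fun i => w i - a) l (𝓝 0) := by simpa using ha.sub_const a
  simp only [orderOf_dvd_iff_pow_eq_one, fun i => cexp_natCast_mul_eq a (w i) n]
  split_ifs with hd
  · have hlim := hr.mul ((tendsto_div_exp_mul_sub_one hn').comp
      (tendsto_nhdsWithin_iff.2 ⟨hsub, hne.mono fun i hi => sub_ne_zero.2 hi⟩))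
    refine hlim.congr' (hne.mono fun i hi => ?_)
    have := sub_ne_zero.2 hi
    simp only [Function.comp_apply, hd, one_mul]
    field_simp
  · have hexp : Tendsto (fun i => cexp (n * (w i - a))) l (𝓝 1) := by
      simpa [Function.comp_def] using
        (Complex.continuous_exp.tendsto _).comp (hsub.const_mul (n : ℂ))
    have hinv := ((hexp.const_mul (cexp a ^ n)).sub_const 1).inv₀
      (by rwa [mul_one, sub_ne_zero])
    simpa using ((continuous_ofReal.tendsto _).comp hre).mul hinv

theorem hasSum_dilog_multiples (hz : ‖z‖ < 1) (r : ℂ) (k : ℕ) :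
    HasSum (fun m : ℕ => z ^ (m + 1) / ((m : ℂ) + 1) *
      if k ∣ m + 1 then r / ((m + 1 : ℕ) : ℂ) else 0) (r * (dilog (z ^ k) / k ^ 2)) := by
  rcases k.eq_zero_or_pos with rfl | hk
  · simp
  have hpos (l : ℕ) : 0 < k * (l + 1) := by positivity
  have hsucc (l : ℕ) : k * (l + 1) - 1 + 1 = k * (l + 1) := Nat.sub_add_cancel (hpos l)
  have hinj : Function.Injective fun l : ℕ => k * (l + 1) - 1 := fun i j h => by
    have h' := congrArg (· + 1) h
    simp only [hsucc] at h'
    exact Nat.succ_injective (Nat.eq_of_mul_eq_mul_left hk h')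
  refine (hinj.hasSum_iff fun m hm => ?_).1 ?_
  · rw [if_neg, mul_zero]
    rintro ⟨_ | c, hc⟩
    · simp at hc
    · exact hm ⟨c, by simp only [← hc, Nat.add_sub_cancel]⟩
  · refine (((hasSum_dilog (norm_pow_lt_one hz hk.ne').le).div_const _).mul_left r).congr_fun
      fun l => ?_
    have hcast : (((k * (l + 1) - 1 : ℕ) : ℂ) + 1) = k * (l + 1) := by
      exact_mod_cast congrArg (Nat.cast (R := ℂ)) (hsucc l)
    have hk' : (k : ℂ) ≠ 0 := Nat.cast_ne_zero.2 hk.ne'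
    have hl : (l : ℂ) + 1 ≠ 0 := Nat.cast_add_one_ne_zero l
    simp only [Function.comp_apply, hsucc, hcast, dvd_mul_right, if_true, ← pow_mul]
    push_cast
    field_simp

-- If `exp a` is not a root of unity, its `orderOf` is `0`, and `x / 0 = 0` makes the limit `0`.
theorem tendsto_re_mul_logGenFun (hz : ‖z‖ < 1) (hζ : Tendsto ζ l (𝓝 z)) (ha : Tendsto w l (𝓝 a))
    (hre : Tendsto (fun i => (w i).re) l (𝓝[>] 0)) (ha0 : a.re = 0)
    (hr : Tendsto (fun i => ((w i).re : ℂ) / (w i - a)) l (𝓝 r)) :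
    Tendsto (fun i => ((w i).re : ℂ) * logGenFun (ζ i) (w i)) l
      (𝓝 (r * (dilog (z ^ orderOf (cexp a)) / orderOf (cexp a) ^ 2))) := by
  obtain ⟨hre0, hpos⟩ := tendsto_nhdsWithin_iff.1 hre
  obtain ⟨ρ, hzρ, hρ⟩ := exists_between hz
  have hρ0 : 0 ≤ ρ := (norm_nonneg z).trans hzρ.le
  have hne : ∀ᶠ i in l, w i ≠ a := hpos.mono fun i hi h => by
    rw [h, Set.mem_Ioi, ha0] at hi
    exact hi.false
  rw [← (hasSum_dilog_multiples hz r _).tsum_eq]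
  simp only [logGenFun, ← tsum_mul_left]
  refine tendsto_tsum_of_dominated_convergence (bound := fun m => ρ ^ (m + 1))
    ((summable_nat_add_iff 1).2 (summable_geometric_of_lt_one hρ0 hρ)) (fun m => ?_) ?_
  · refine (((hζ.pow (m + 1)).div_const ((m : ℂ) + 1)).mul
      (tendsto_re_mul_exp_sub_one_inv ha hre0 hne hr m.succ_ne_zero)).congr fun i => ?_
    push_cast
    ring
  · filter_upwards [hpos, hζ.norm.eventually_le_const hzρ] with i (hi : 0 < (w i).re) hζi m
    rw [norm_mul, norm_real, Real.norm_of_nonneg hi.le]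
    calc _ ≤ (w i).re * (‖ζ i‖ ^ (m + 1) * (w i).re⁻¹) := by
          gcongr
          exact norm_logGenFun_term_le (ζ i) hi m
      _ = ‖ζ i‖ ^ (m + 1) := by field_simp
      _ ≤ ρ ^ (m + 1) := by gcongr

end Limit

theorem norm_re_div_le {w : ℂ} {δ : ℝ} (hre : 0 < w.re) (hδ : w.re ≤ δ * |w.im|) :
    ‖(w.re : ℂ) / w‖ ≤ δ := by
  have hδ0 : 0 < δ := pos_of_mul_pos_left (hre.trans_le hδ) (abs_nonneg _)
  have hw : 0 < ‖w‖ := hre.trans_le (re_le_norm w)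
  rw [norm_div, norm_real, Real.norm_of_nonneg hre.le, div_le_iff₀ hw]
  exact hδ.trans (mul_le_mul_of_nonneg_left (abs_im_le_norm w) hδ0.le)

theorem re_mul_dilog_le_fk_sq {r : ℂ} (hr : r ∈ Metric.closedBall (1 / 2 : ℂ) (1 / 2)) (k : ℕ)
    (z : ℂ) : (r * (dilog (z ^ k) / k ^ 2)).re ≤ fk k z ^ 2 := by
  refine (re_mul_le_of_mem_closedBall hr _).trans_eq ?_
  rw [fk_sq, norm_div, norm_pow, norm_natCast, ← ofReal_natCast, ← ofReal_pow, div_ofReal_re,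
    ← add_div, div_div, mul_comm]

theorem orderOf_exp_ne_one {θ : ℝ} (hθ : θ ∈ Set.Icc (-Real.pi) Real.pi) (h0 : θ ≠ 0) :
    orderOf (cexp (θ * I)) ≠ 1 := fun h => by
  have hcos : Real.cos θ = 1 := by
    rw [← exp_ofReal_mul_I_re, orderOf_eq_one_iff.1 h, one_re]
  refine h0 ((Real.cos_eq_one_iff_of_lt_of_lt ?_ ?_).1 hcos) <;> linarith [Real.pi_pos, hθ.1, hθ.2]

section MinorArc

variable {ι : Type*} {u : Ultrafilter ι} {δ : ι → ℝ} {ζ w : ι → ℂ} {z : ℂ}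

theorem exists_tendsto_ofReal_mul_I (him : ∀ᶠ i in u, |(w i).im| ≤ Real.pi)
    (hre : Tendsto (fun i => (w i).re) u (𝓝 0)) :
    ∃ θ ∈ Set.Icc (-Real.pi) Real.pi, Tendsto w u (𝓝 (θ * I)) := by
  obtain ⟨θ, hθ, hlim⟩ := (isCompact_Icc (a := -Real.pi) (b := Real.pi)).ultrafilter_le_nhds'
    (u.map fun i => (w i).im) (him.mono fun i hi => abs_le.1 hi)
  have hlim' : Tendsto (fun i => (w i).im) u (𝓝 θ) := hlim
  have h := ((continuous_ofReal.tendsto _).comp hre).add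
    (((continuous_ofReal.tendsto _).comp hlim').mul_const I)
  exact ⟨θ, hθ, by simpa [Function.comp_def, re_add_im] using h⟩

theorem exists_tendsto_re_div_sub {a : ℂ} (ha : a.re = 0) :
    ∃ r ∈ Metric.closedBall (1 / 2 : ℂ) (1 / 2),
      Tendsto (fun i => ((w i).re : ℂ) / (w i - a)) u (𝓝 r) := by
  have hmem : ∀ᶠ i in u, ((w i).re : ℂ) / (w i - a) ∈ Metric.closedBall (1 / 2 : ℂ) (1 / 2) :=
    .of_forall fun i => by simpa [ha] using re_div_self_mem_closedBall (w i - a)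
  exact (isCompact_closedBall _ _).ultrafilter_le_nhds' (u.map _) hmem

theorem exists_tendsto_re_mul_logGenFun_of_re_le (hz : ‖z‖ < 1) (hζ : Tendsto ζ u (𝓝 z))
    (hδ : Tendsto δ u (𝓝 0)) (hre : Tendsto (fun i => (w i).re) u (𝓝[>] 0))
    (him : ∀ᶠ i in u, |(w i).im| ≤ Real.pi) (hw : ∀ᶠ i in u, (w i).re ≤ δ i * |(w i).im|) :
    ∃ L, Tendsto (fun i => ((w i).re : ℂ) * logGenFun (ζ i) (w i)) u (𝓝 L) ∧
      (L.re = 0 ∨ ∃ k ≥ 2, L.re ≤ fk k z ^ 2) := by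
  obtain ⟨hre0, hpos⟩ := tendsto_nhdsWithin_iff.1 hre
  obtain ⟨θ, hθ, hlim⟩ := exists_tendsto_ofReal_mul_I him hre0
  obtain ⟨r, hr, hrlim⟩ := exists_tendsto_re_div_sub (u := u) (w := w) (a := θ * I) (by simp)
  refine ⟨_, tendsto_re_mul_logGenFun hz hζ hlim hre (by simp) hrlim, ?_⟩
  rcases eq_or_ne θ 0 with rfl | hθ0
  · have hr0 : Tendsto (fun i => ((w i).re : ℂ) / (w i - (0 : ℝ) * I)) u (𝓝 0) := by
      refine squeeze_zero_norm' ?_ hδ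
      filter_upwards [hpos, hw] with i hi hδi
      simpa using norm_re_div_le hi hδi
    exact .inl (by simp [tendsto_nhds_unique hrlim hr0])
  · rcases Nat.lt_or_ge (orderOf (cexp (θ * I))) 2 with hk | hk
    · have h0 : orderOf (cexp (θ * I)) = 0 :=
        (Nat.le_one_iff_eq_zero_or_eq_one.1 (Nat.le_of_lt_succ hk)).resolve_right
          (orderOf_exp_ne_one hθ hθ0)
      exact .inl (by simp [h0])
    · exact .inr ⟨_, hk, re_mul_dilog_le_fk_sq hr _ z⟩

end MinorArc

theorem exists_re_mul_logGenFun_lt {z : ℂ} (hz : ‖z‖ < 1) (h1 : 0 < fk 1 z)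
    (hk : ∀ k ≥ 2, fk k z < fk 1 z) :
    ∃ δ > 0, ∀ᶠ p in 𝓝 z ×ˢ 𝓝[>] (0 : ℝ), ∀ w : ℂ, w.re = p.2 → |w.im| ≤ Real.pi →
      w.re ≤ δ * |w.im| → w.re * (logGenFun p.1 w).re < fk 1 z ^ 2 - δ := by
  suffices h : ∀ᶠ q in comap (fun q : ℝ × ℂ × ℂ => (q.1, q.2.1, q.2.2.re))
      (𝓝[>] 0 ×ˢ 𝓝 z ×ˢ 𝓝[>] 0), |q.2.2.im| ≤ Real.pi → q.2.2.re ≤ q.1 * |q.2.2.im| →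
      q.2.2.re * (logGenFun q.2.1 q.2.2).re < fk 1 z ^ 2 - q.1 by
    obtain ⟨δ, hδ, hδ0⟩ := ((eventually_comap.1 h).curry.and self_mem_nhdsWithin).exists
    exact ⟨δ, hδ0, hδ.mono fun p hp w hw => hp (δ, p.1, w) (by rw [hw])⟩
  refine mem_iff_ultrafilter.2 fun u hu => by_contra fun hcon => ?_
  rw [← Ultrafilter.compl_mem_iff_notMem] at hcon
  have hlim := tendsto_comap.mono_left hu
  have hδ := (tendsto_nhdsWithin_iff.1 hlim.fst).1
  obtain ⟨L, hL, hcases⟩ := exists_tendsto_re_mul_logGenFun_of_re_le hz hlim.snd.fst hδ hlim.snd.snd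
    (mem_of_superset hcon fun q hq => by_contra fun h => hq fun h' => absurd h' h)
    (mem_of_superset hcon fun q hq => by_contra fun h => hq fun _ h' => absurd h' h)
  have hge : fk 1 z ^ 2 ≤ L.re := by
    have hsub := tendsto_const_nhds (x := fk 1 z ^ 2).sub hδ
    rw [sub_zero] at hsub
    refine le_of_tendsto_of_tendsto hsub ((continuous_re.tendsto _).comp hL)
      (mem_of_superset hcon fun q hq => ?_)
    simp only [Set.mem_compl_iff, Set.mem_ofPred_eq, Classical.not_imp, not_lt] at hq
    simpa using hq.2.2
  rcases hcases with h0 | ⟨k, hk2, hle⟩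
  · exact (h0 ▸ hge).not_gt (by positivity)
  · exact (hge.trans hle).not_gt (pow_lt_pow_left₀ (hk k hk2) (fk_nonneg k z) two_ne_zero)

/-! ### Expansion in a cone at the origin -/

/-- The holomorphic part `1 / (exp u - 1) - 1 / u` of `1 / (exp u - 1)` at `u = 0`. At `u = 0`
itself both reciprocals are the junk value `0`, so the value there is `0` rather than the limit
`-1 / 2`. -/
noncomputable def expSubOneInvRem (u : ℂ) : ℂ :=
  (cexp u - 1)⁻¹ - u⁻¹

theorem expSubOneInvRem_eq {u : ℂ} (hu : u ≠ 0) (he : cexp u - 1 ≠ 0) :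
    expSubOneInvRem u = -((cexp u - 1 - u) / u ^ 2 * (u / (cexp u - 1))) := by
  rw [expSubOneInvRem]
  field_simp
  ring

theorem norm_expSubOneInvRem_le {u : ℂ} {A : ℝ} (hu : 0 < u.re) (hA : ‖u‖ ≤ A * u.re) :
    ‖expSubOneInvRem u‖ ≤ A + 1 := by
  have hu' : 0 < ‖u‖ := hu.trans_le (re_le_norm u)
  have hA0 : 0 ≤ A := (pos_of_mul_pos_left (hu'.trans_le hA) hu.le).le
  have he : 0 < ‖cexp u - 1‖ := hu.trans_le (re_le_norm_exp_sub_one u)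
  have hle : ‖u‖ ≤ A * ‖cexp u - 1‖ := hA.trans (by gcongr; exact re_le_norm_exp_sub_one u)
  rcases le_total ‖u‖ 1 with h | h
  · rw [expSubOneInvRem_eq (norm_pos_iff.1 hu') (norm_pos_iff.1 he), norm_neg, norm_mul, norm_div,
      norm_div, norm_pow]
    have hsq : ‖cexp u - 1 - u‖ / ‖u‖ ^ 2 ≤ 1 :=
      div_le_one_of_le₀ (norm_exp_sub_one_sub_id_le h) (by positivity)
    have hdiv : ‖u‖ / ‖cexp u - 1‖ ≤ A := (div_le_iff₀ he).2 hle
    exact (mul_le_of_le_one_left (by positivity) hsq).trans (by linarith)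
  · rw [expSubOneInvRem]
    refine (norm_sub_le _ _).trans (add_le_add ?_ ?_)
    · rw [norm_inv, inv_le_iff_one_le_mul₀ he]
      exact h.trans hle
    · rw [norm_inv]
      exact inv_le_one_of_one_le₀ h

theorem tendsto_exp_sub_one_sub_div_sq :
    Tendsto (fun u : ℂ => (cexp u - 1 - u) / u ^ 2) (𝓝[≠] 0) (𝓝 (1 / 2)) := by
  have hbig : (fun u : ℂ => cexp u - (1 + u + u ^ 2 / 2)) =O[𝓝 0] (· ^ 3) := by
    simpa [Finset.sum_range_succ] using Complex.exp_sub_sum_range_isBigO_pow 3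
  have hlim := ((hbig.trans_isLittleO (Asymptotics.isLittleO_pow_pow
    (by norm_num : 2 < 3))).mono (nhdsWithin_le_nhds (s := {0}ᶜ))).tendsto_div_nhds_zero
  have h := hlim.add_const (1 / 2 : ℂ)
  rw [zero_add] at h
  refine h.congr' (eventually_mem_nhdsWithin.mono fun u (hu : u ≠ 0) => ?_)
  field_simp
  ring

theorem tendsto_expSubOneInvRem : Tendsto expSubOneInvRem (𝓝[≠] 0) (𝓝 (-1 / 2)) := by
  have hdiv := tendsto_div_exp_mul_sub_one (one_ne_zero (α := ℂ))
  simp only [one_mul, inv_one] at hdiv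
  have h := (tendsto_exp_sub_one_sub_div_sq.mul hdiv).neg
  rw [mul_one, ← neg_div] at h
  refine h.congr' ?_
  filter_upwards [hdiv.eventually_ne one_ne_zero] with u hu
  exact (expSubOneInvRem_eq (div_ne_zero_iff.1 hu).1 (div_ne_zero_iff.1 hu).2).symm

/-- The difference between `logGenFun z w` and its singular part `dilog z / w` at `w = 0`. -/
noncomputable def logGenFunRem (z w : ℂ) : ℂ :=
  logGenFun z w - dilog z / w

theorem hasSum_logGenFunRem {z w : ℂ} (hz : ‖z‖ < 1) (hw : 0 < w.re) :
    HasSum (fun m : ℕ => z ^ (m + 1) / ((m : ℂ) + 1) * expSubOneInvRem (((m : ℂ) + 1) * w))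
      (logGenFunRem z w) := by
  refine ((hasSum_logGenFun hz hw).sub ((hasSum_dilog hz.le).div_const w)).congr_fun fun m => ?_
  have hm : (m : ℂ) + 1 ≠ 0 := Nat.cast_add_one_ne_zero m
  rw [expSubOneInvRem, mul_sub]
  congr 1
  field_simp

theorem norm_logGenFunRem_term_le (z : ℂ) {w : ℂ} {A : ℝ} (hw : 0 < w.re) (hA : ‖w‖ ≤ A * w.re)
    (m : ℕ) : ‖z ^ (m + 1) / ((m : ℂ) + 1) * expSubOneInvRem (((m : ℂ) + 1) * w)‖ ≤
      ‖z‖ ^ (m + 1) * (A + 1) := by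
  refine norm_pow_div_mul_le (norm_expSubOneInvRem_le (re_add_one_mul_pos m hw) ?_) m
  rw [re_add_one_mul, norm_mul, ← Nat.cast_add_one, norm_natCast, ← Nat.cast_add_one,
    mul_left_comm]
  gcongr

theorem norm_logGenFunRem_le {z w : ℂ} {A ρ : ℝ} (hz : ‖z‖ ≤ ρ) (hρ : ρ < 1) (hw : 0 < w.re)
    (hA : ‖w‖ ≤ A * w.re) : ‖logGenFunRem z w‖ ≤ (1 - ρ)⁻¹ * (A + 1) := by
  have hρ0 : 0 ≤ ρ := (norm_nonneg z).trans hz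
  have hA0 : 0 ≤ A := nonneg_of_mul_nonneg_left ((norm_nonneg w).trans hA) hw
  rw [← (hasSum_logGenFunRem (hz.trans_lt hρ) hw).tsum_eq]
  refine tsum_of_norm_bounded ((hasSum_geometric_of_lt_one hρ0 hρ).mul_right _) fun m =>
    (norm_logGenFunRem_term_le z hw hA m).trans ?_
  gcongr
  exact (pow_le_pow_left₀ (norm_nonneg z) hz _).trans
    (pow_le_pow_of_le_one hρ0 hρ.le m.le_succ)

theorem tendsto_logGenFunRem {ι : Type*} {l : Filter ι} {ζ w : ι → ℂ} {z : ℂ} {A : ℝ}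
    (hz : ‖z‖ < 1) (hζ : Tendsto ζ l (𝓝 z)) (hw : Tendsto w l (𝓝 0))
    (hre : ∀ᶠ i in l, 0 < (w i).re) (hA : ∀ᶠ i in l, ‖w i‖ ≤ A * (w i).re) :
    Tendsto (fun i => logGenFunRem (ζ i) (w i)) l (𝓝 (log (1 - z) / 2)) := by
  obtain ⟨ρ, hzρ, hρ⟩ := exists_between hz
  have hρ0 : 0 ≤ ρ := (norm_nonneg z).trans hzρ.le
  have hsum := (hasSum_taylorSeries_neg_log' hz).mul_right (-1 / 2)
  rw [show -log (1 - z) * (-1 / 2) = log (1 - z) / 2 by ring] at hsum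
  rw [← hsum.tsum_eq]
  refine Tendsto.congr' (f₁ := fun i => ∑' m : ℕ, ζ i ^ (m + 1) / ((m : ℂ) + 1) *
    expSubOneInvRem (((m : ℂ) + 1) * w i)) ?_ ?_
  · filter_upwards [hre, hζ.norm.eventually_lt_const hz] with i hi hζi
    exact (hasSum_logGenFunRem hζi hi).tsum_eq
  · refine tendsto_tsum_of_dominated_convergence (bound := fun m => ρ ^ (m + 1) * (A + 1))
      (((summable_nat_add_iff 1).2 (summable_geometric_of_lt_one hρ0 hρ)).mul_right _)
      (fun m => ((hζ.pow (m + 1)).div_const _).mul (tendsto_expSubOneInvRem.comp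
        (tendsto_nhdsWithin_iff.2 ⟨by simpa using hw.const_mul ((m : ℂ) + 1), ?_⟩))) ?_
    · filter_upwards [hre] with i hi h0
      exact (re_add_one_mul_pos m hi).ne' (by rw [h0, zero_re])
    · filter_upwards [hre, hA, hζ.norm.eventually_le_const hzρ] with i hi hAi hζi m
      have hA0 : 0 ≤ A := nonneg_of_mul_nonneg_left ((norm_nonneg _).trans hAi) hi
      refine (norm_logGenFunRem_term_le (ζ i) hi hAi m).trans ?_
      gcongr

/-! ### The saddle-point integral -/

theorem dilogRoot_one_sq (z : ℂ) : dilogRoot 1 z ^ 2 = dilog z := by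
  simpa using dilogRoot_sq 1 z

theorem tendsto_dilogRoot_one {z : ℂ} (hz : ‖z‖ < 1) (h1 : 0 < fk 1 z) :
    Tendsto (dilogRoot 1) (𝓝 z) (𝓝 (dilogRoot 1 z)) :=
  (analyticAt_dilogRoot hz one_ne_zero h1).continuousAt

theorem tendsto_fk_one {z : ℂ} (hz : ‖z‖ < 1) (h1 : 0 < fk 1 z) :
    Tendsto (fk 1) (𝓝 z) (𝓝 (fk 1 z)) := by
  simpa only [Function.comp_def, re_dilogRoot] using
    (continuous_re.tendsto _).comp (tendsto_dilogRoot_one hz h1)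

theorem inv_sq_mul_re_le_inv_re {w : ℂ} {A : ℝ} (hw : 0 < w.re) (hA : ‖w‖ ≤ A * w.re) :
    (A ^ 2 * w.re)⁻¹ ≤ (w⁻¹).re := by
  have hw' : 0 < ‖w‖ := hw.trans_le (re_le_norm w)
  have hsq : ‖w‖ ^ 2 ≤ (A ^ 2 * w.re) * w.re := by
    calc ‖w‖ ^ 2 ≤ (A * w.re) ^ 2 := by gcongr
      _ = (A ^ 2 * w.re) * w.re := by ring
  rw [inv_re, normSq_eq_norm_sq, inv_eq_one_div,
    div_le_div_iff₀ (pos_of_mul_pos_left ((by positivity : 0 < ‖w‖ ^ 2).trans_le hsq) hw.le)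
      (by positivity), one_mul]
  linarith

theorem norm_le_mul_re_of_mul_abs_im_le {w : ℂ} {δ : ℝ} (hδ : 0 < δ) (hw : δ * |w.im| ≤ w.re) :
    ‖w‖ ≤ (1 + δ⁻¹) * w.re := by
  have hre : 0 ≤ w.re := (by positivity : 0 ≤ δ * |w.im|).trans hw
  have him : |w.im| ≤ δ⁻¹ * w.re := by rwa [← div_eq_inv_mul, le_div_iff₀' hδ]
  calc ‖w‖ ≤ |w.re| + |w.im| := norm_le_abs_re_add_abs_im w
    _ ≤ (1 + δ⁻¹) * w.re := by rw [abs_of_nonneg hre]; linarith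

theorem continuous_logGenFun_comp {X : Type*} [TopologicalSpace X] {z : ℂ} (hz : ‖z‖ < 1) {σ : ℝ}
    (hσ : 0 < σ) {f : X → ℂ} (hf : Continuous f) (hre : ∀ x, (f x).re = σ) :
    Continuous fun x => logGenFun z (f x) := by
  have hpos (x : X) : 0 < (f x).re := by rwa [hre]
  refine continuous_tsum (fun m => continuous_const.mul (Continuous.inv₀ (by fun_prop) fun x =>
    exp_sub_one_ne_zero (re_add_one_mul_pos m (hpos x)))) (summable_norm_pow_succ_mul hz σ⁻¹)
    fun m x => ?_
  rw [← hre x]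
  exact norm_logGenFun_term_le z (hpos x) m

/-- The vertical line through the saddle point `t / s`, parametrised at the scale `s * √s` of the
Gaussian fluctuations about that point. -/
noncomputable def saddleLine (t : ℂ) (s v : ℝ) : ℂ :=
  (t + (v / √s : ℝ) * I) / s

theorem re_saddleLine (t : ℂ) (s v : ℝ) : (saddleLine t s v).re = t.re / s := by
  simp [saddleLine]

theorem im_saddleLine (t : ℂ) (s v : ℝ) : (saddleLine t s v).im = (t.im + v / √s) / s := by
  simp [saddleLine]

theorem continuous_saddleLine (t : ℂ) (s : ℝ) : Continuous (saddleLine t s) := by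
  unfold saddleLine
  fun_prop

theorem ofReal_mul_saddleLine (t : ℂ) {s : ℝ} (hs : s ≠ 0) (v : ℝ) :
    s * saddleLine t s v = t + (v / √s : ℝ) * I :=
  mul_div_cancel₀ _ (ofReal_ne_zero.2 hs)

theorem integral_indicator_comp_saddleLine (f : ℂ → ℂ) (t : ℂ) {s : ℝ} (hs : 0 < s) :
    ∫ v : ℝ, {v | (saddleLine t s v).im ∈ Set.Ioc (-Real.pi) Real.pi}.indicator
      (fun v => f (saddleLine t s v)) v =
      (s * √s : ℝ) * ∫ φ in (-Real.pi)..Real.pi, f ((t.re / s : ℝ) + φ * I) := by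
  have him (v : ℝ) : (saddleLine t s v).im = t.im / s + v * (s * √s)⁻¹ := by
    rw [im_saddleLine]
    field_simp
  set g : ℝ → ℂ := (Set.Ioc (-Real.pi) Real.pi).indicator fun φ => f ((t.re / s : ℝ) + φ * I)
  have hg (v : ℝ) : {v | (saddleLine t s v).im ∈ Set.Ioc (-Real.pi) Real.pi}.indicator
      (fun v => f (saddleLine t s v)) v = g (t.im / s + v * (s * √s)⁻¹) := by
    have hline : ((t.re / s : ℝ) : ℂ) + (saddleLine t s v).im * I = saddleLine t s v := by
      rw [← re_saddleLine t s v, re_add_im]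
    simp only [g, ← him, Set.indicator_apply, Set.mem_ofPred_eq, hline]
  simp only [hg]
  rw [Measure.integral_comp_mul_right (fun x => g (t.im / s + x)),
    integral_add_left_eq_self g, inv_inv, abs_of_pos (by positivity), real_smul,
    intervalIntegral.integral_of_le (by linarith [Real.pi_pos]), ← integral_indicator
    measurableSet_Ioc]

/-- The exponent `log ∑ₙ Fₙ(z) exp (-n w) + s² w - 2 s √Li₂(z)` at the point `w` of `saddleLine`
with parameter `v`. -/
noncomputable def saddleExponent (z : ℂ) (s v : ℝ) : ℂ :=
  logGenFun z (saddleLine (dilogRoot 1 z) s v) + s ^ 2 * saddleLine (dilogRoot 1 z) s v -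
    2 * s * dilogRoot 1 z

/-- The integrand of Cauchy's formula for `Fₙ(z)` with `s = √n`, divided by its expected size
`exp (2 s √Li₂(z))` and transported to the real line along `saddleLine`. -/
noncomputable def saddleIntegrand (z : ℂ) (s : ℝ) : ℝ → ℂ :=
  {v | (saddleLine (dilogRoot 1 z) s v).im ∈ Set.Ioc (-Real.pi) Real.pi}.indicator fun v =>
    cexp (saddleExponent z s v)

theorem integral_saddleIntegrand {n : ℕ} (hn : n ≠ 0) {z : ℂ} (hz : ‖z‖ < 1) (h1 : 0 < fk 1 z) :
    ∫ v, saddleIntegrand z √n v =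
      (√n * √√n : ℝ) * (2 * Real.pi * F n z * cexp (-((2 * √n : ℝ) * dilogRoot 1 z))) := by
  have hs : 0 < √(n : ℝ) := Real.sqrt_pos.2 (by positivity)
  have hsq : ((√(n : ℝ) : ℝ) : ℂ) ^ 2 = n := by
    rw [← ofReal_pow, Real.sq_sqrt n.cast_nonneg, ofReal_natCast]
  have hσ : 0 < (dilogRoot 1 z).re / √n := div_pos (by rwa [re_dilogRoot]) hs
  rw [← integral_exp_logGenFun_mul_exp hn hz hσ, ← intervalIntegral.integral_mul_const]
  refine (integral_indicator_comp_saddleLine (fun w => cexp (logGenFun z w + (√n : ℝ) ^ 2 * w -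
    2 * (√n : ℝ) * dilogRoot 1 z)) _ hs).trans ?_
  simp only [hsq, sub_eq_add_neg, Complex.exp_add, ofReal_mul, ofReal_ofNat]

theorem aestronglyMeasurable_saddleIntegrand {z : ℂ} (hz : ‖z‖ < 1) (h1 : 0 < fk 1 z) {s : ℝ}
    (hs : 0 < s) : AEStronglyMeasurable (saddleIntegrand z s) := by
  unfold saddleIntegrand saddleExponent
  have hline := continuous_saddleLine (dilogRoot 1 z) s
  have hσ : 0 < (dilogRoot 1 z).re / s := div_pos (by rwa [re_dilogRoot]) hs
  have hlog := continuous_logGenFun_comp hz hσ hline (re_saddleLine _ s)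
  refine AEStronglyMeasurable.indicator (Continuous.aestronglyMeasurable (by fun_prop)) ?_
  exact (continuous_im.comp hline).measurable measurableSet_Ioc

section Exponent

variable {z : ℂ} {s : ℝ} (h1 : 0 < fk 1 z) (hs : 0 < s) (v : ℝ)
include h1 hs

theorem re_saddleLine_pos : 0 < (saddleLine (dilogRoot 1 z) s v).re := by
  rw [re_saddleLine, re_dilogRoot]
  exact div_pos h1 hs

theorem saddleExponent_eq :
    saddleExponent z s v = logGenFunRem z (saddleLine (dilogRoot 1 z) s v) -
      v ^ 2 * (s * saddleLine (dilogRoot 1 z) s v)⁻¹ := by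
  rw [saddleExponent]
  have hs' : (s : ℂ) ≠ 0 := ofReal_ne_zero.2 hs.ne'
  have hline := ofReal_mul_saddleLine (dilogRoot 1 z) hs.ne' v
  have hpos := re_saddleLine_pos h1 hs v
  set w := saddleLine (dilogRoot 1 z) s v
  have hw : w ≠ 0 := fun h => hpos.ne' (by rw [h, zero_re])
  have hv : (v : ℂ) ^ 2 = s * ((v / √s : ℝ) : ℂ) ^ 2 := by
    rw [← ofReal_pow, ← ofReal_pow, ← ofReal_mul, div_pow, Real.sq_sqrt hs.le,
      mul_div_cancel₀ _ hs.ne']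
  have hsq : (s * w - dilogRoot 1 z) ^ 2 = -((v / √s : ℝ) : ℂ) ^ 2 := by
    rw [hline, add_sub_cancel_left, mul_pow, I_sq, mul_neg_one]
  rw [logGenFunRem, hv, ← dilogRoot_one_sq]
  field_simp
  linear_combination hsq

theorem norm_exp_saddleExponent_le_gaussian {A ρ d : ℝ} (hz : ‖z‖ ≤ ρ) (hρ : ρ < 1)
    (hd : fk 1 z ≤ d)
    (hA : ‖saddleLine (dilogRoot 1 z) s v‖ ≤ A * (saddleLine (dilogRoot 1 z) s v).re) :
    ‖cexp (saddleExponent z s v)‖ ≤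
      Real.exp ((1 - ρ)⁻¹ * (A + 1)) * Real.exp (-(A ^ 2 * d)⁻¹ * v ^ 2) := by
  have hpos := re_saddleLine_pos h1 hs v
  have hre := re_saddleLine (dilogRoot 1 z) s v
  rw [saddleExponent_eq h1 hs]
  set w := saddleLine (dilogRoot 1 z) s v
  have hw' : 0 < ‖w‖ := hpos.trans_le (re_le_norm w)
  have hA0 : 0 < A := pos_of_mul_pos_left (hw'.trans_le hA) hpos.le
  have hsw : ((s : ℂ) * w).re = fk 1 z := by
    rw [re_ofReal_mul, hre, re_dilogRoot, mul_div_cancel₀ _ hs.ne']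
  have hinv : (A ^ 2 * d)⁻¹ ≤ (((s : ℂ) * w)⁻¹).re := by
    refine le_trans ?_ (inv_sq_mul_re_le_inv_re (A := A) (hsw ▸ h1) ?_)
    · rw [hsw]
      exact inv_anti₀ (by positivity) (by gcongr)
    · rw [norm_mul, norm_real, Real.norm_of_nonneg hs.le, re_ofReal_mul, mul_left_comm]
      gcongr
  have hrem := (re_le_norm _).trans (norm_logGenFunRem_le hz hρ hpos hA)
  rw [Complex.norm_exp, ← Real.exp_add, Real.exp_le_exp, sub_re, ← ofReal_pow, re_ofReal_mul]
  have := mul_le_mul_of_nonneg_left hinv (sq_nonneg v)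
  linarith

theorem norm_exp_saddleExponent_le_exp_neg {T c : ℝ} (hc : T + c * fk 1 z ≤ fk 1 z ^ 2)
    (hT : (saddleLine (dilogRoot 1 z) s v).re *
      (logGenFun z (saddleLine (dilogRoot 1 z) s v)).re < T) :
    ‖cexp (saddleExponent z s v)‖ ≤ Real.exp (-(c * s)) := by
  have hre := re_saddleLine (dilogRoot 1 z) s v
  set w := saddleLine (dilogRoot 1 z) s v
  rw [re_dilogRoot] at hre
  have hexp : (saddleExponent z s v).re = (logGenFun z w).re - s * fk 1 z := by
    rw [saddleExponent, sub_re, add_re, ← ofReal_pow, re_ofReal_mul, ← ofReal_ofNat, ← ofReal_mul,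
      re_ofReal_mul, re_dilogRoot, hre]
    field_simp
    ring
  rw [Complex.norm_exp, Real.exp_le_exp, hexp]
  rw [hre, div_mul_eq_mul_div, div_lt_iff₀ hs] at hT
  nlinarith [mul_le_mul_of_nonneg_right hc hs.le]

end Exponent

theorem eventually_exp_neg_le_inv_one_add_sq {c : ℝ} (hc : 0 < c) (b : ℝ) :
    ∀ᶠ s : ℝ in atTop, ∀ v : ℝ, |v| ≤ √s * (Real.pi * s + b) →
      Real.exp (-(c * s)) ≤ (1 + v ^ 2)⁻¹ := by
  set C : ℝ := 1 + (Real.pi + 1) ^ 2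
  have hexp : ∀ᶠ s : ℝ in atTop, C * s ^ 3 ≤ Real.exp (c * s) := by
    filter_upwards [((isLittleO_pow_exp_pos_mul_atTop 3 hc).const_mul_left C).bound one_pos]
      with s hs
    simpa [abs_of_pos (Real.exp_pos _)] using (le_abs_self _).trans hs
  filter_upwards [hexp, eventually_ge_atTop 1, eventually_ge_atTop b] with s hs h1 hb v hv
  have hs0 : 0 ≤ s := by linarith
  have hv2 : v ^ 2 ≤ s ^ 3 * (Real.pi + 1) ^ 2 := by
    calc v ^ 2 = |v| ^ 2 := (sq_abs v).symm
      _ ≤ (√s * (Real.pi * s + s)) ^ 2 := by gcongr; exact hv.trans (by gcongr)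
      _ = s ^ 3 * (Real.pi + 1) ^ 2 := by rw [mul_pow, Real.sq_sqrt hs0]; ring
  have h3 : 1 ≤ s ^ 3 := one_le_pow₀ h1
  rw [Real.exp_neg]
  refine inv_anti₀ (by positivity) (le_trans ?_ hs)
  linarith

theorem abs_le_of_abs_im_saddleLine_le {t : ℂ} {s v r : ℝ} (hs : 0 < s)
    (h : |(saddleLine t s v).im| ≤ r) : |v| ≤ √s * (r * s + |t.im|) := by
  have hr : 0 < √s := Real.sqrt_pos.2 hs
  have hv : v = √s * ((saddleLine t s v).im * s - t.im) := by
    rw [im_saddleLine]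
    field_simp
    ring
  calc |v| = √s * |(saddleLine t s v).im * s - t.im| := by
        conv_lhs => rw [hv, abs_mul, abs_of_pos hr]
    _ ≤ √s * (|(saddleLine t s v).im| * s + |t.im|) := by
        gcongr
        exact (abs_sub _ _).trans_eq (by rw [abs_mul, abs_of_pos hs])
    _ ≤ √s * (r * s + |t.im|) := by gcongr

section SaddlePoint

variable {z : ℂ} (hz : ‖z‖ < 1) (h1 : 0 < fk 1 z)
include hz h1

theorem eventually_saddle_conditions {d ρ : ℝ} (hd : fk 1 z < d) (hρ : ‖z‖ < ρ) :
    ∀ᶠ p : ℝ × ℂ in atTop ×ˢ 𝓝 z, 0 < p.1 ∧ 0 < fk 1 p.2 ∧ fk 1 p.2 ≤ d ∧ ‖p.2‖ ≤ ρ := by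
  have hfk := (tendsto_fk_one hz h1).comp (tendsto_snd (f := (atTop : Filter ℝ)))
  filter_upwards [tendsto_fst.eventually (eventually_gt_atTop 0), hfk.eventually_const_lt h1,
    hfk.eventually_le_const hd, tendsto_snd.norm.eventually_le_const hρ] with p h2 h3 h4 h5
  exact ⟨h2, h3, h4, h5⟩

theorem tendsto_fk_one_div :
    Tendsto (fun p : ℝ × ℂ => fk 1 p.2 / p.1) (atTop ×ˢ 𝓝 z) (𝓝[>] 0) := by
  have hfk := (tendsto_fk_one hz h1).comp (tendsto_snd (f := (atTop : Filter ℝ)))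
  refine tendsto_nhdsWithin_iff.2 ⟨hfk.div_atTop tendsto_fst, ?_⟩
  filter_upwards [eventually_saddle_conditions hz h1 (lt_add_one _) hz] with p hp
  exact div_pos hp.2.1 hp.1

theorem exists_eventually_norm_exp_saddleExponent_le (hk : ∀ k ≥ 2, fk k z < fk 1 z) :
    ∃ δ > 0, ∀ᶠ p : ℝ × ℂ in atTop ×ˢ 𝓝 z, ∀ v : ℝ,
      |(saddleLine (dilogRoot 1 p.2) p.1 v).im| ≤ Real.pi →
      (saddleLine (dilogRoot 1 p.2) p.1 v).re ≤ δ * |(saddleLine (dilogRoot 1 p.2) p.1 v).im| →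
      ‖cexp (saddleExponent p.2 p.1 v)‖ ≤ (1 + v ^ 2)⁻¹ := by
  obtain ⟨δ, hδ, hminor⟩ := exists_re_mul_logGenFun_lt hz h1 hk
  refine ⟨δ, hδ, ?_⟩
  have hfk := (tendsto_fk_one hz h1).comp (tendsto_snd (f := (atTop : Filter ℝ)))
  have him := ((continuous_im.tendsto _).comp ((tendsto_dilogRoot_one hz h1).comp
    (tendsto_snd (f := (atTop : Filter ℝ))))).abs
  set c := δ / (2 * fk 1 z)
  have hc : ∀ᶠ p : ℝ × ℂ in atTop ×ˢ 𝓝 z, fk 1 z ^ 2 - δ + c * fk 1 p.2 ≤ fk 1 p.2 ^ 2 := by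
    have hlt : fk 1 z ^ 2 - δ + c * fk 1 z < fk 1 z ^ 2 := by
      have : c * fk 1 z = δ / 2 := by simp only [c]; field_simp
      linarith
    exact ((((hfk.const_mul c).const_add _).eventually_lt (hfk.pow 2)) hlt).mono fun p hp => hp.le
  filter_upwards [(tendsto_snd.prodMk (tendsto_fk_one_div hz h1)).eventually hminor, hc,
    eventually_saddle_conditions hz h1 (lt_add_one _) hz,
    tendsto_fst.eventually (eventually_exp_neg_le_inv_one_add_sq (by positivity : 0 < c)
      (|(dilogRoot 1 z).im| + 1)), him.eventually_le_const (lt_add_one _)]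
    with p hp hcp ⟨hs, hfkp, _⟩ hexp himp v hπ hδv
  refine (norm_exp_saddleExponent_le_exp_neg hfkp hs v hcp (hp _ ?_ hπ hδv)).trans (hexp v ?_)
  · rw [re_saddleLine, re_dilogRoot]
  · refine (abs_le_of_abs_im_saddleLine_le hs hπ).trans ?_
    gcongr
    exact himp

theorem exists_integrable_norm_saddleIntegrand_le (hk : ∀ k ≥ 2, fk k z < fk 1 z) :
    ∃ g : ℝ → ℝ, Integrable g ∧
      ∀ᶠ p : ℝ × ℂ in atTop ×ˢ 𝓝 z, ∀ v, ‖saddleIntegrand p.2 p.1 v‖ ≤ g v := by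
  obtain ⟨δ, hδ, hminor⟩ := exists_eventually_norm_exp_saddleExponent_le hz h1 hk
  obtain ⟨ρ, hzρ, hρ⟩ := exists_between hz
  obtain ⟨d, hd⟩ := exists_gt (fk 1 z)
  have hd0 : 0 < d := h1.trans hd
  set A := 1 + δ⁻¹
  refine ⟨fun v => Real.exp ((1 - ρ)⁻¹ * (A + 1)) * Real.exp (-(A ^ 2 * d)⁻¹ * v ^ 2) +
    (1 + v ^ 2)⁻¹, ((integrable_exp_neg_mul_sq (by positivity)).const_mul _).add
    integrable_inv_one_add_sq, ?_⟩
  filter_upwards [hminor, eventually_saddle_conditions hz h1 hd hzρ]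
    with p hp ⟨hs, hfkp, hdp, hρp⟩ v
  rw [saddleIntegrand, Set.indicator_apply]
  split_ifs with hv
  · rcases le_total (saddleLine (dilogRoot 1 p.2) p.1 v).re
      (δ * |(saddleLine (dilogRoot 1 p.2) p.1 v).im|) with hcone | hcone
    · exact (hp v (abs_le.2 ⟨hv.1.le, hv.2⟩) hcone).trans (le_add_of_nonneg_left (by positivity))
    · exact (norm_exp_saddleExponent_le_gaussian hfkp hs v hρp hρ hdp
        (norm_le_mul_re_of_mul_abs_im_le hδ hcone)).trans (le_add_of_nonneg_right (by positivity))
  · rw [norm_zero]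
    positivity

theorem tendsto_mul_saddleLine (v : ℝ) :
    Tendsto (fun p : ℝ × ℂ => p.1 * saddleLine (dilogRoot 1 p.2) p.1 v) (atTop ×ˢ 𝓝 z)
      (𝓝 (dilogRoot 1 z)) := by
  have hroot := (tendsto_dilogRoot_one hz h1).comp (tendsto_snd (f := (atTop : Filter ℝ)))
  have hx : Tendsto (fun p : ℝ × ℂ => v / √p.1) (atTop ×ˢ 𝓝 z) (𝓝 0) :=
    (Real.tendsto_sqrt_atTop.comp tendsto_fst).const_div_atTop v
  have hlim := hroot.add (((continuous_ofReal.tendsto 0).comp hx).mul_const I)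
  rw [ofReal_zero, zero_mul, add_zero] at hlim
  refine hlim.congr' ((tendsto_fst.eventually (eventually_ne_atTop 0)).mono fun p hp => ?_)
  exact (ofReal_mul_saddleLine _ hp v).symm

theorem tendsto_saddleLine (v : ℝ) :
    Tendsto (fun p : ℝ × ℂ => saddleLine (dilogRoot 1 p.2) p.1 v) (atTop ×ˢ 𝓝 z) (𝓝 0) := by
  have hinv : Tendsto (fun p : ℝ × ℂ => ((p.1⁻¹ : ℝ) : ℂ)) (atTop ×ˢ 𝓝 z) (𝓝 0) := by
    simpa [Function.comp_def] using
      (continuous_ofReal.tendsto 0).comp (tendsto_inv_atTop_zero.comp tendsto_fst)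
  have hlim := hinv.mul (tendsto_mul_saddleLine hz h1 v)
  rw [zero_mul] at hlim
  refine hlim.congr' ((tendsto_fst.eventually (eventually_ne_atTop 0)).mono fun p hp => ?_)
  rw [ofReal_inv, inv_mul_cancel_left₀ (ofReal_ne_zero.2 hp)]

theorem exists_eventually_norm_saddleLine_le (v : ℝ) :
    ∃ A, ∀ᶠ p : ℝ × ℂ in atTop ×ˢ 𝓝 z, ‖saddleLine (dilogRoot 1 p.2) p.1 v‖ ≤
      A * (saddleLine (dilogRoot 1 p.2) p.1 v).re := by
  have hlim := tendsto_mul_saddleLine hz h1 v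
  have hre : 0 < (dilogRoot 1 z).re := by rwa [re_dilogRoot]
  set A := ‖dilogRoot 1 z‖ / (dilogRoot 1 z).re + 1
  have hlt : ‖dilogRoot 1 z‖ < A * (dilogRoot 1 z).re := by
    rw [add_mul, div_mul_cancel₀ _ hre.ne']
    linarith
  refine ⟨A, ?_⟩
  filter_upwards [hlim.norm.eventually_lt (((continuous_re.tendsto _).comp hlim).const_mul A) hlt,
    tendsto_fst.eventually (eventually_gt_atTop 0)] with p hp hs
  rw [Function.comp_apply, norm_mul, norm_real, Real.norm_of_nonneg hs.le, re_ofReal_mul,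
    mul_left_comm] at hp
  exact (lt_of_mul_lt_mul_left hp hs.le).le

theorem tendsto_saddleIntegrand (v : ℝ) :
    Tendsto (fun p : ℝ × ℂ => saddleIntegrand p.2 p.1 v) (atTop ×ˢ 𝓝 z)
      (𝓝 (cexp (log (1 - z) / 2 - v ^ 2 * (dilogRoot 1 z)⁻¹))) := by
  have hcond := eventually_saddle_conditions hz h1 (lt_add_one _) hz
  have hline := tendsto_saddleLine hz h1 v
  obtain ⟨A, hA⟩ := exists_eventually_norm_saddleLine_le hz h1 v
  have hroot : dilogRoot 1 z ≠ 0 := fun h => h1.ne' (by rw [← re_dilogRoot, h, zero_re])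
  have hrem := tendsto_logGenFunRem hz tendsto_snd hline
    (hcond.mono fun p hp => re_saddleLine_pos hp.2.1 hp.1 v) hA
  have him : ∀ᶠ p : ℝ × ℂ in atTop ×ˢ 𝓝 z,
      (saddleLine (dilogRoot 1 p.2) p.1 v).im ∈ Set.Ioc (-Real.pi) Real.pi :=
    ((continuous_im.tendsto _).comp hline).eventually
      (Ioc_mem_nhds (by simp [Real.pi_pos]) Real.pi_pos)
  refine ((continuous_exp.tendsto _).comp (hrem.sub
    (((tendsto_mul_saddleLine hz h1 v).inv₀ hroot).const_mul ((v : ℂ) ^ 2)))).congr' ?_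
  filter_upwards [hcond, him] with p ⟨hs, hfkp, _⟩ hp
  rw [saddleIntegrand, Set.indicator_of_mem (by exact hp), saddleExponent_eq hfkp hs]
  rfl

theorem tendsto_integral_saddleIntegrand (hk : ∀ k ≥ 2, fk k z < fk 1 z) :
    Tendsto (fun p : ℝ × ℂ => ∫ v, saddleIntegrand p.2 p.1 v) (atTop ×ˢ 𝓝 z)
      (𝓝 (∫ v : ℝ, cexp (log (1 - z) / 2 - v ^ 2 * (dilogRoot 1 z)⁻¹))) := by
  obtain ⟨g, hg, hbound⟩ := exists_integrable_norm_saddleIntegrand_le hz h1 hk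
  obtain ⟨ρ, hzρ, hρ⟩ := exists_between hz
  refine tendsto_integral_filter_of_dominated_convergence g ?_
    (hbound.mono fun p hp => .of_forall hp) hg (.of_forall (tendsto_saddleIntegrand hz h1))
  filter_upwards [eventually_saddle_conditions hz h1 (lt_add_one _) hzρ] with p ⟨hs, hfkp, _, hp⟩
  exact aestronglyMeasurable_saddleIntegrand (hp.trans_lt hρ) hfkp hs

end SaddlePoint

theorem integral_exp_sub_sq_mul_ne_zero (a : ℂ) {b : ℂ} (hb : 0 < b.re) :
    ∫ v : ℝ, cexp (a - v ^ 2 * b) ≠ 0 := by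
  have hsplit (v : ℝ) : cexp (a - v ^ 2 * b) = cexp a * cexp (-b * v ^ 2) := by
    rw [← Complex.exp_add]
    ring_nf
  have hb0 : b ≠ 0 := fun h => hb.ne' (by rw [h, zero_re])
  simp only [hsplit]
  rw [integral_const_mul, integral_gaussian_complex hb]
  refine mul_ne_zero (Complex.exp_ne_zero a) ?_
  rw [Ne, cpow_eq_zero_iff, not_and_or]
  exact .inl (div_ne_zero (ofReal_ne_zero.2 Real.pi_ne_zero) hb0)

theorem tendsto_log_div_of_tendsto_mul_exp {ι : Type*} {l : Filter ι} {s x a : ι → ℝ} {A C : ℝ}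
    (hs : Tendsto s l atTop) (ha : Tendsto a l (𝓝 A)) (hC : C ≠ 0)
    (h : Tendsto (fun i => s i * √(s i) * (x i * Real.exp (-(2 * s i * a i)))) l (𝓝 C)) :
    Tendsto (fun i => Real.log (x i) / (2 * s i)) l (𝓝 A) := by
  have hlog : Tendsto (fun i => Real.log (s i) / s i) l (𝓝 0) :=
    Real.isLittleO_log_id_atTop.tendsto_div_nhds_zero.comp hs
  have hlim := (ha.add ((h.log hC).div_atTop (hs.const_mul_atTop two_pos))).sub
    (hlog.const_mul (3 / 4))
  rw [mul_zero, sub_zero, add_zero] at hlim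
  refine hlim.congr' ?_
  filter_upwards [hs.eventually_gt_atTop 0, h.eventually_ne hC] with i hi hne
  obtain ⟨hss, hxe⟩ := mul_ne_zero_iff.1 hne
  rw [Real.log_mul hss hxe, Real.log_mul (left_ne_zero_of_mul hxe) (Real.exp_pos _).ne',
    Real.log_exp, Real.log_mul hi.ne' (right_ne_zero_of_mul hss), Real.log_sqrt hi.le]
  field_simp
  ring

theorem norm_integral_saddleIntegrand {n : ℕ} (hn : n ≠ 0) {z : ℂ} (hz : ‖z‖ < 1)
    (h1 : 0 < fk 1 z) : ‖∫ v, saddleIntegrand z √n v‖ / (2 * Real.pi) =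
      √n * √√n * (‖F n z‖ * Real.exp (-(2 * √n * fk 1 z))) := by
  rw [integral_saddleIntegrand hn hz h1, norm_mul, norm_mul, norm_mul, Complex.norm_exp, neg_re,
    re_ofReal_mul, re_dilogRoot, ← ofReal_ofNat, ← ofReal_mul, norm_real, norm_real,
    Real.norm_of_nonneg (by positivity), Real.norm_of_nonneg (by positivity)]
  field_simp

theorem tendsto_log_norm_F_div {z : ℂ} (hz : ‖z‖ < 1) (h1 : 0 < fk 1 z)
    (hk : ∀ k ≥ 2, fk k z < fk 1 z) :
    Tendsto (fun p : ℕ × ℂ => Real.log ‖F p.1 p.2‖ / (2 * √p.1)) (atTop ×ˢ 𝓝 z) (𝓝 (fk 1 z)) := by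
  have hs : Tendsto (fun p : ℕ × ℂ => √(p.1 : ℝ)) (atTop ×ˢ 𝓝 z) atTop :=
    Real.tendsto_sqrt_atTop.comp (tendsto_natCast_atTop_atTop.comp tendsto_fst)
  have hfk := (tendsto_fk_one hz h1).comp (tendsto_snd (f := (atTop : Filter ℕ)))
  have hb : 0 < (dilogRoot 1 z)⁻¹.re := by
    have hre : 0 < (dilogRoot 1 z).re := by rwa [re_dilogRoot]
    rw [inv_re]
    exact div_pos hre (normSq_pos.2 fun h => hre.ne' (by rw [h, zero_re]))
  have hC := integral_exp_sub_sq_mul_ne_zero (log (1 - z) / 2) hb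
  refine tendsto_log_div_of_tendsto_mul_exp hs hfk
    (div_ne_zero (norm_ne_zero_iff.2 hC) Real.two_pi_pos.ne') ?_
  refine (((tendsto_integral_saddleIntegrand hz h1 hk).comp
    (hs.prodMk tendsto_snd)).norm.div_const (2 * Real.pi)).congr' ?_
  filter_upwards [tendsto_fst.eventually (eventually_ne_atTop 0), hfk.eventually_const_lt h1,
    tendsto_snd.norm.eventually_lt_const hz] with p hn hp hzp
  exact norm_integral_saddleIntegrand hn hzp hp

theorem tendstoLocallyUniformlyOn_log_norm_F_div :
    TendstoLocallyUniformlyOn (fun (n : ℕ) z => Real.log ‖F n z‖ / (2 * √n)) (fk 1) atTop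
      (interior R1) := by
  refine tendstoLocallyUniformlyOn_iff_forall_tendsto.2 fun z hz => ?_
  have hz1 : ‖z‖ < 1 := (interior_subset hz).1
  have h1 := fk_one_pos hz
  refine Tendsto.mono_left ?_ (prod_mono_right _ nhdsWithin_le_nhds)
  exact (((tendsto_fk_one hz1 h1).comp tendsto_snd).prodMk_nhds
    (tendsto_log_norm_F_div hz1 h1 fun k hk => fk_lt_fk_one hz hk)).mono_right
    (nhds_le_uniformity _)

/-- On region R(1): uniformly on compact subsets of the interior of R(1),
ln|Fₙ(z)|/(2√n) → (1/1)·Re √(Li₂(z^1)). -/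
theorem sqrt_n_asymptotics_region_1 (K : Set ℂ) (hK : K ⊆ interior R1) (hKc : IsCompact K) :
    TendstoUniformlyOn (fun (n : ℕ) (z : ℂ) => Real.log ‖F n z‖ / (2 * Real.sqrt n))
      (fun z : ℂ => (1 / (1 : ℝ)) * ((dilog (z ^ 1)) ^ (1 / 2 : ℂ)).re) atTop K := by
  have h := (tendstoLocallyUniformlyOn_iff_tendstoUniformlyOn_of_compact hKc).1
    (tendstoLocallyUniformlyOn_log_norm_F_div.mono hK)
  exact h.congr_right fun z _ => by rw [fk, Nat.cast_one]
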